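/- arXiv:2307.05859 — 2 statements merged into one kernel-verified Lean document; each statement's English description precedes it below -/
import Mathlib

section
/- Let k be an algebraically closed field of characteristic zero and n ≥ 1 an integer. Let f, g, h be irreducible, pairwise relatively prime polynomials in the polynomial ring k[x_1,…,x_n] such that f^a + g^b + h^c = 0 for integers a ≥ b ≥ c ≥ 1. Then c = 1. -/
namespace Iit

section abs
variable {k L ι : Type*} [Field k] [Field L] [Algebra k L]

/-- levels of stability under derivations -/
def lev (C : Subalgebra k L) (D : ι → Derivation k L L) : ℕ → Subalgebra k L
  | 0 => C
  | m + 1 =>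
    { carrier := {b | b ∈ lev C D m ∧ ∀ i, D i b ∈ lev C D m}
      mul_mem' := by
        rintro a b ⟨ha, ha'⟩ ⟨hb, hb'⟩
        refine ⟨mul_mem ha hb, fun i => ?_⟩
        rw [Derivation.leibniz, smul_eq_mul, smul_eq_mul]
        exact add_mem (mul_mem ha (hb' i)) (mul_mem hb (ha' i))
      add_mem' := by
        rintro a b ⟨ha, ha'⟩ ⟨hb, hb'⟩
        refine ⟨add_mem ha hb, fun i => ?_⟩
        rw [map_add]
        exact add_mem (ha' i) (hb' i)
      algebraMap_mem' := by
        intro r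
        refine ⟨algebraMap_mem _ r, fun i => ?_⟩
        rw [Derivation.map_algebraMap]
        exact zero_mem _ }

variable (C : Subalgebra k L) (D : ι → Derivation k L L)

lemma mem_lev_succ {m : ℕ} {b : L} :
    b ∈ lev C D (m + 1) ↔ b ∈ lev C D m ∧ ∀ i, D i b ∈ lev C D m := Iff.rfl

lemma lev_of_stable (T : Set L) (hT : ∀ x ∈ T, x ∈ C) (hD : ∀ x ∈ T, ∀ i, D i x ∈ T) (m : ℕ) :
    ∀ x ∈ T, x ∈ lev C D m := by
  induction m with
  | zero => exact hT
  | succ m ih => exact fun x hx => ⟨ih x hx, fun i => ih _ (hD x hx i)⟩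

lemma lev_div {h g : L} (hh : ∀ m, h ∈ lev C D m) (hg : ∀ m, g ∈ lev C D m)
    (P : ∀ b, h * b ∈ C → g * b ∈ C → b ∈ C) (m : ℕ) :
    ∀ b, h * b ∈ lev C D m → g * b ∈ lev C D m → b ∈ lev C D m := by
  induction m with
  | zero => exact P
  | succ m ih =>
    intro b h1 h2
    have hb := ih b h1.1 h2.1
    refine ⟨hb, fun i => ih _ ?_ ?_⟩
    · have h3 := h1.2 i
      rw [Derivation.leibniz, smul_eq_mul, smul_eq_mul] at h3
      have := sub_mem h3 (mul_mem hb ((hh (m+1)).2 i))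
      simpa using this
    · have h3 := h2.2 i
      rw [Derivation.leibniz, smul_eq_mul, smul_eq_mul] at h3
      have := sub_mem h3 (mul_mem hb ((hg (m+1)).2 i))
      simpa using this

/-- Klein's forms -/
def kF (u v : L) : L := u * v * (u ^ 10 + 11 * u ^ 5 * v ^ 5 - v ^ 10)
def kG (u v : L) : L :=
  -(u ^ 20 + v ^ 20) + 228 * (u ^ 15 * v ^ 5 - u ^ 5 * v ^ 15) - 494 * (u ^ 10 * v ^ 10)
def kH (u v : L) : L := u ^ 30 + v ^ 30 + 522 * (u ^ 25 * v ^ 5 - u ^ 5 * v ^ 25)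
  - 10005 * (u ^ 20 * v ^ 10 + u ^ 10 * v ^ 20)

lemma klein_rel (u v : L) : kH u v ^ 2 + kG u v ^ 3 = 1728 * kF u v ^ 5 := by
  unfold kH kG kF; ring


lemma klein_int (u v f g h : L) (hf : kF u v = f) (hg : kG u v = g) (hh : kH u v = h) :
  298023223876953125 * (u ^ 10) ^ 12 + (178337097167968750 * g * (u ^ 10) ^ 10
  - 95462799072265625 * h * (u ^ 10) ^ 9 - 21724395751953125 * g ^ 2 * (u ^ 10) ^ 8
  + 2388122558593750 * g * h * (u ^ 10) ^ 7
  + (110009667968750 * g ^ 3 - 108767199707031250 * f ^ 5) * (u ^ 10) ^ 6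
  - 797177734375 * g ^ 2 * h * (u ^ 10) ^ 5
  + (- 2476546875 * g ^ 4 - 77711003906250 * g * f ^ 5) * (u ^ 10) ^ 4
  + (3918750 * g ^ 3 * h - 239009375000 * h * f ^ 5) * (u ^ 10) ^ 3
  + (3124 * g ^ 5 + 64913750 * g ^ 2 * f ^ 5) * (u ^ 10) ^ 2
  + (- g ^ 4 * h + 500 * g * h * f ^ 5) * (u ^ 10) + f ^ 10) = 0 := by
  subst hf hg hh
  unfold kF kG kH
  ring

lemma isIntegral_of_rel (C : Subalgebra k L) (N : ℕ) (x : L) (c : Fin N → L) (hc : ∀ i, c i ∈ C)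
    (h : x ^ N + ∑ i : Fin N, c i * x ^ (i : ℕ) = 0) : IsIntegral C x := by
  refine ⟨Polynomial.X ^ N + ∑ i : Fin N, Polynomial.C (⟨c i, hc i⟩ : C) * Polynomial.X ^ (i : ℕ),
    Polynomial.monic_X_pow_add (Polynomial.degree_sum_fin_lt _), ?_⟩
  rw [Polynomial.eval₂_add, Polynomial.eval₂_finsetSum]
  simp only [Polynomial.eval₂_mul, Polynomial.eval₂_pow, Polynomial.eval₂_X, Polynomial.eval₂_C]
  exact h

lemma klein_u_mem [CharZero k] (hC : ∀ x : L, IsIntegral C x → x ∈ C) {u v f g h : L}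
    (hf : kF u v = f) (hg : kG u v = g) (hh : kH u v = h)
    (mf : f ∈ C) (mg : g ∈ C) (mh : h ∈ C) : u ∈ C := by
  have key := klein_int u v f g h hf hg hh
  have : CharZero L := charZero_of_injective_algebraMap (algebraMap k L).injective
  have nat : ∀ n : ℕ, [n.AtLeastTwo] → (OfNat.ofNat n : L) ∈ C := fun n _ => by
    exact_mod_cast natCast_mem C n
  have inv : (298023223876953125 : L)⁻¹ ∈ C := by
    have := algebraMap_mem C ((298023223876953125 : k)⁻¹)
    rwa [map_inv₀, map_ofNat] at this
  have h10 : IsIntegral C (u ^ 10) := by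
    apply isIntegral_of_rel C 12 (u ^ 10)
      ![298023223876953125⁻¹ * (f ^ 10), 298023223876953125⁻¹ * (- g ^ 4 * h + 500 * g * h * f ^ 5),
        298023223876953125⁻¹ * (3124 * g ^ 5 + 64913750 * g ^ 2 * f ^ 5),
        298023223876953125⁻¹ * (3918750 * g ^ 3 * h - 239009375000 * h * f ^ 5),
        298023223876953125⁻¹ * (- 2476546875 * g ^ 4 - 77711003906250 * g * f ^ 5),
        298023223876953125⁻¹ * (- 797177734375 * g ^ 2 * h),
        298023223876953125⁻¹ * (110009667968750 * g ^ 3 - 108767199707031250 * f ^ 5),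
        298023223876953125⁻¹ * (2388122558593750 * g * h),
        298023223876953125⁻¹ * (- 21724395751953125 * g ^ 2),
        298023223876953125⁻¹ * (- 95462799072265625 * h),
        298023223876953125⁻¹ * (178337097167968750 * g), 0]
    · intro i
      fin_cases i <;> simp only [Fin.zero_eta, Fin.mk_one, Fin.reduceFinMk, Matrix.cons_val,
        Matrix.cons_val_zero, Matrix.cons_val_one, neg_mul] <;>
      first
        | exact zero_mem _
        | (refine mul_mem inv ?_
           repeat' first
            | assumption
            | apply nat
            | apply add_mem
            | apply sub_mem
            | apply neg_mem
            | apply mul_mem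
            | apply pow_mem)
    · simp only [Fin.sum_univ_succ, Fin.sum_univ_zero, Matrix.cons_val_zero, Matrix.cons_val_succ,
        Fin.val_zero, Fin.val_succ]
      have he : (298023223876953125 : L)⁻¹ * 298023223876953125 = 1 := by norm_num
      generalize (298023223876953125 : L)⁻¹ = e at he ⊢
      linear_combination e * key - (u ^ 10) ^ 12 * he
  exact hC _ (IsIntegral.of_pow (by norm_num) h10)

lemma kF_symm (u v : L) : kF v (-u) = kF u v := by unfold kF; ring
lemma kG_symm (u v : L) : kG v (-u) = kG u v := by unfold kG; ring
lemma kH_symm (u v : L) : kH v (-u) = kH u v := by unfold kH; ring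

def FV (u v : L) : L := u * (u ^ 10 + 11 * u ^ 5 * v ^ 5 - v ^ 10) +
  u * v * (55 * u ^ 5 * v ^ 4 - 10 * v ^ 9)
def GV (u v : L) : L := -20 * v ^ 19 + 228 * (5 * u ^ 15 * v ^ 4 - 15 * u ^ 5 * v ^ 14)
  - 4940 * (u ^ 10 * v ^ 9)
def HV (u v : L) : L := 30 * v ^ 29 + 522 * (5 * u ^ 25 * v ^ 4 - 25 * u ^ 5 * v ^ 24)
  - 10005 * (10 * u ^ 20 * v ^ 9 + 20 * u ^ 10 * v ^ 19)
def FU (u v : L) : L := v * (u ^ 10 + 11 * u ^ 5 * v ^ 5 - v ^ 10) +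
  u * v * (10 * u ^ 9 + 55 * u ^ 4 * v ^ 5)
def GU (u v : L) : L := -20 * u ^ 19 + 228 * (15 * u ^ 14 * v ^ 5 - 5 * u ^ 4 * v ^ 15)
  - 4940 * (u ^ 9 * v ^ 10)
def HU (u v : L) : L := 30 * u ^ 29 + 522 * (25 * u ^ 24 * v ^ 5 - 5 * u ^ 4 * v ^ 25)
  - 10005 * (20 * u ^ 19 * v ^ 10 + 10 * u ^ 9 * v ^ 20)

lemma d_kF (d : Derivation k L L) (u v : L) : d (kF u v) = FU u v * d u + FV u v * d v := by
  have h11 : d 11 = 0 := by simpa using d.map_natCast 11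
  unfold kF FU FV
  simp only [map_add, map_sub, Derivation.leibniz, Derivation.leibniz_pow, smul_eq_mul,
    nsmul_eq_mul, h11]
  push_cast
  ring
lemma d_kG (d : Derivation k L L) (u v : L) : d (kG u v) = GU u v * d u + GV u v * d v := by
  have h1 : d 228 = 0 := by simpa using d.map_natCast 228
  have h2 : d 494 = 0 := by simpa using d.map_natCast 494
  unfold kG GU GV
  simp only [map_add, map_sub, map_neg, Derivation.leibniz, Derivation.leibniz_pow, smul_eq_mul,
    nsmul_eq_mul, h1, h2]
  push_cast
  ring
lemma d_kH (d : Derivation k L L) (u v : L) : d (kH u v) = HU u v * d u + HV u v * d v := by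
  have h1 : d 522 = 0 := by simpa using d.map_natCast 522
  have h2 : d 10005 = 0 := by simpa using d.map_natCast 10005
  unfold kH HU HV
  simp only [map_add, map_sub, Derivation.leibniz, Derivation.leibniz_pow, smul_eq_mul,
    nsmul_eq_mul, h1, h2]
  push_cast
  ring

lemma jac1 (u v : L) : FU u v * GV u v - FV u v * GU u v = 20 * kH u v := by
  unfold FU GV FV GU kH; ring
lemma jac2 (u v : L) : FU u v * HV u v - FV u v * HU u v = -30 * kG u v ^ 2 := by
  unfold FU HV FV HU kG; ring

lemma klein_d1 (d : Derivation k L L) (u v : L) :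
    20 * kH u v * d u = GV u v * d (kF u v) - FV u v * d (kG u v) := by
  rw [d_kF, d_kG, ← jac1]; ring
lemma klein_d2 (d : Derivation k L L) (u v : L) :
    30 * kG u v ^ 2 * d u = FV u v * d (kH u v) - HV u v * d (kF u v) := by
  rw [d_kF, d_kH]
  have := jac2 u v
  linear_combination (d u) * this

lemma FV_mem (u v : L) (hu : u ∈ C) (hv : v ∈ C) : FV u v ∈ C := by
  have nat : ∀ n : ℕ, [n.AtLeastTwo] → (OfNat.ofNat n : L) ∈ C := fun n _ => by
    exact_mod_cast natCast_mem C n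
  unfold FV
  repeat' first
            | assumption
            | apply nat
            | apply add_mem
            | apply sub_mem
            | apply neg_mem
            | apply mul_mem
            | apply pow_mem
lemma GV_mem (u v : L) (hu : u ∈ C) (hv : v ∈ C) : GV u v ∈ C := by
  have nat : ∀ n : ℕ, [n.AtLeastTwo] → (OfNat.ofNat n : L) ∈ C := fun n _ => by
    exact_mod_cast natCast_mem C n
  unfold GV
  simp only [neg_mul]
  repeat' first
            | assumption
            | apply nat
            | apply add_mem
            | apply sub_mem
            | apply neg_mem
            | apply mul_mem
            | apply pow_mem
lemma HV_mem (u v : L) (hu : u ∈ C) (hv : v ∈ C) : HV u v ∈ C := by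
  have nat : ∀ n : ℕ, [n.AtLeastTwo] → (OfNat.ofNat n : L) ∈ C := fun n _ => by
    exact_mod_cast natCast_mem C n
  unfold HV
  repeat' first
            | assumption
            | apply nat
            | apply add_mem
            | apply sub_mem
            | apply neg_mem
            | apply mul_mem
            | apply pow_mem

lemma nat_inv_mem [CharZero k] (n : ℕ) (hn : n ≠ 0) {x : L} (h : (n : L) * x ∈ C) : x ∈ C := by
  have : CharZero L := charZero_of_injective_algebraMap (algebraMap k L).injective
  have h1 := algebraMap_mem C ((n : k)⁻¹)
  have h2 := mul_mem h1 h
  have h3 : (n : L) ≠ 0 := by exact_mod_cast hn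
  rw [map_inv₀, map_natCast, inv_mul_cancel_left₀ h3] at h2
  exact h2

/-- main abstract stability theorem -/
theorem klein_lev [CharZero k] (hC : ∀ x : L, IsIntegral C x → x ∈ C) (f g h : L)
    (mf : ∀ m, f ∈ lev C D m) (mg : ∀ m, g ∈ lev C D m) (mh : ∀ m, h ∈ lev C D m)
    (P : ∀ b, h * b ∈ C → g ^ 2 * b ∈ C → b ∈ C) (m : ℕ) :
    ∀ u v, kF u v = f → kG u v = g → kH u v = h → u ∈ lev C D m := by
  induction m with
  | zero => exact fun u v hf hg hh => klein_u_mem C hC hf hg hh (mf 0) (mg 0) (mh 0)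
  | succ m ih =>
    intro u v hf hg hh
    have mu := ih u v hf hg hh
    have mv := ih v (-u) (by rw [kF_symm, hf]) (by rw [kG_symm, hg]) (by rw [kH_symm, hh])
    refine ⟨mu, fun i => lev_div C D mh (fun m => pow_mem (mg m) 2) P m _ ?_ ?_⟩
    · have := klein_d1 (D i) u v
      rw [hf, hg, hh] at this
      apply nat_inv_mem _ 20 (by norm_num)
      rw [← mul_assoc]
      push_cast
      rw [this]
      exact sub_mem (mul_mem (GV_mem _ _ _ mu mv) ((mf (m+1)).2 i))
        (mul_mem (FV_mem _ _ _ mu mv) ((mg (m+1)).2 i))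
    · have := klein_d2 (D i) u v
      rw [hf, hg, hh] at this
      apply nat_inv_mem _ 30 (by norm_num)
      rw [← mul_assoc]
      push_cast
      rw [this]
      exact sub_mem (mul_mem (FV_mem _ _ _ mu mv) ((mh (m+1)).2 i))
        (mul_mem (HV_mem _ _ _ mu mv) ((mf (m+1)).2 i))

/-- surjectivity of the Klein map over an algebraically closed field -/
theorem klein_surj [CharZero L] [IsAlgClosed L] (f g h : L) (hf : f ≠ 0) (hg : g ≠ 0) (hh : h ≠ 0)
    (rel : h ^ 2 + g ^ 3 = 1728 * f ^ 5) : ∃ u v, kF u v = f ∧ kG u v = g ∧ kH u v = h := by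
  obtain ⟨r, hr⟩ : ∃ r : L, kG r 1 ^ 3 * f ^ 5 = g ^ 3 * kF r 1 ^ 5 := by
    let p : Polynomial L :=
      (-(Polynomial.X ^ 20 + 1) + 228 * (Polynomial.X ^ 15 - Polynomial.X ^ 5)
        - 494 * Polynomial.X ^ 10) ^ 3 * Polynomial.C (f ^ 5) -
      Polynomial.C (g ^ 3) *
        (Polynomial.X * (Polynomial.X ^ 10 + 11 * Polynomial.X ^ 5 - 1)) ^ 5
    have hdeg : p.degree ≠ 0 := by
      intro h0
      have hn : p.natDegree = 60 := by
        simp only [p]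
        compute_degree!
        refine ⟨?_, hf⟩
        rw [Polynomial.coeff_one]
        norm_num
      have h2 : p.natDegree = 0 := Polynomial.natDegree_eq_of_degree_eq_some h0
      rw [hn] at h2
      norm_num at h2
    obtain ⟨r, hr⟩ := IsAlgClosed.exists_root p hdeg
    refine ⟨r, ?_⟩
    rw [Polynomial.IsRoot.def] at hr
    simp only [p, Polynomial.eval_sub, Polynomial.eval_mul, Polynomial.eval_pow, Polynomial.eval_add,
      Polynomial.eval_neg, Polynomial.eval_X, Polynomial.eval_one, Polynomial.eval_C,
      Polynomial.eval_ofNat] at hr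
    unfold kG kF
    linear_combination hr
  have kr := klein_rel r 1
  have hF : kF r 1 ≠ 0 := by
    intro h0
    have h1 : kG r 1 = 0 := by
      rw [h0] at hr
      have : kG r 1 ^ 3 * f ^ 5 = 0 := by rw [hr]; ring
      simpa [hf] using this
    unfold kF at h0
    unfold kG at h1
    have : r = 0 ∨ (r ^ 5) ^ 2 + 11 * r ^ 5 - 1 = 0 := by
      rcases mul_eq_zero.mp h0 with h | h
      · left; simpa using h
      · right; rw [← h]; ring
    rcases this with h2 | h2
    · subst h2; norm_num at h1
    · have e : -((r ^ 5) ^ 4 + 1) + 228 * ((r ^ 5) ^ 3 - r ^ 5) - 494 * (r ^ 5) ^ 2 = 0 := by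
        linear_combination h1
      generalize r ^ 5 = p at h2 e
      have e2 : 34375 * p - 3125 = 0 := by
        linear_combination e - (-p ^ 2 + 239 * p - 3124) * h2
      have e3 : 11 * p = 1 := by
        have : (3125 : L) ≠ 0 := by norm_num
        apply mul_left_cancel₀ this
        linear_combination e2
      have e4 : p ^ 2 = 0 := by linear_combination h2 - e3
      have e5 : p = 0 := by simpa using e4
      simp [e5] at e3
  have hG : kG r 1 ≠ 0 := by
    intro h0
    rw [h0] at hr
    have : g ^ 3 * kF r 1 ^ 5 ≠ 0 := mul_ne_zero (pow_ne_zero _ hg) (pow_ne_zero _ hF)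
    apply this
    rw [← hr]; ring
  have hr2 : kH r 1 ^ 2 * f ^ 5 = h ^ 2 * kF r 1 ^ 5 := by
    linear_combination f ^ 5 * kr - hr - kF r 1 ^ 5 * rel
  have hH : kH r 1 ≠ 0 := by
    intro h0
    rw [h0] at hr2
    have : h ^ 2 * kF r 1 ^ 5 ≠ 0 := mul_ne_zero (pow_ne_zero _ hh) (pow_ne_zero _ hF)
    apply this
    rw [← hr2]; ring
  obtain ⟨A, hA⟩ : ∃ A, A * kF r 1 = f := ⟨f / kF r 1, by field_simp⟩
  obtain ⟨B, hB⟩ : ∃ B, B * kG r 1 = g := ⟨g / kG r 1, by field_simp⟩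
  obtain ⟨C, hC⟩ : ∃ C, C * kH r 1 = h := ⟨h / kH r 1, by field_simp⟩
  have hC0 : C ≠ 0 := by rintro rfl; apply hh; rw [← hC]; ring
  have hA0 : A ≠ 0 := by rintro rfl; apply hf; rw [← hA]; ring
  have hB0 : B ≠ 0 := by rintro rfl; apply hg; rw [← hB]; ring
  have hAB : A ^ 5 = B ^ 3 := by
    have : kG r 1 ^ 3 * kF r 1 ^ 5 ≠ 0 := mul_ne_zero (pow_ne_zero _ hG) (pow_ne_zero _ hF)
    apply mul_left_cancel₀ this
    rw [← hA, ← hB] at hr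
    linear_combination hr
  have hAC : A ^ 5 = C ^ 2 := by
    have : kH r 1 ^ 2 * kF r 1 ^ 5 ≠ 0 := mul_ne_zero (pow_ne_zero _ hH) (pow_ne_zero _ hF)
    apply mul_left_cancel₀ this
    rw [← hA, ← hC] at hr2
    linear_combination hr2
  obtain ⟨v, hv⟩ := IsAlgClosed.exists_pow_nat_eq (A * B / C) (n := 2) (by norm_num)
  have w1 : v ^ 12 = A := by
    rw [show v ^ 12 = (v ^ 2) ^ 6 by ring, hv, div_pow, div_eq_iff (pow_ne_zero _ hC0)]
    rw [show C ^ 6 = (C ^ 2) ^ 3 by ring, ← hAC, mul_pow, show B ^ 6 = (B ^ 3) ^ 2 by ring, ← hAB]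
    ring
  have w2 : v ^ 20 = B := by
    rw [show v ^ 20 = (v ^ 2) ^ 10 by ring, hv, div_pow, div_eq_iff (pow_ne_zero _ hC0)]
    rw [show C ^ 10 = (C ^ 2) ^ 5 by ring, ← hAC, mul_pow, show B ^ 10 = (B ^ 3) ^ 3 * B by ring,
      ← hAB]
    ring
  have w3 : v ^ 30 = C := by
    rw [show v ^ 30 = (v ^ 2) ^ 15 by ring, hv, div_pow, div_eq_iff (pow_ne_zero _ hC0)]
    rw [show C * C ^ 15 = (C ^ 2) ^ 8 by ring, ← hAC, mul_pow, show B ^ 15 = (B ^ 3) ^ 5 by ring,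
      ← hAB]
    ring
  refine ⟨r * v, v, ?_, ?_, ?_⟩
  · rw [← hA, ← w1]; unfold kF; ring
  · rw [← hB, ← w2]; unfold kG; ring
  · rw [← hC, ← w3]; unfold kH; ring

end abs
end Iit

namespace Iit
open MvPolynomial TensorProduct
set_option linter.unusedSectionVars false

section conc
variable {k : Type*} [Field k] [CharZero k] {σ : Type*}
  {L : Type*} [Field L] [Algebra (FractionRing (MvPolynomial σ k)) L] [Algebra (MvPolynomial σ k) L]
  [IsScalarTower (MvPolynomial σ k) (FractionRing (MvPolynomial σ k)) L]
  [Algebra.IsAlgebraic (FractionRing (MvPolynomial σ k)) L]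
  [Algebra k L] [IsScalarTower k (MvPolynomial σ k) L]

variable (L) in
lemma exists_der (d : Derivation k (MvPolynomial σ k) (MvPolynomial σ k)) :
    ∃ D : Derivation k L L, ∀ r, D (algebraMap (MvPolynomial σ k) L r) = algebraMap _ L (d r) := by
  let K := FractionRing (MvPolynomial σ k)
  have : CharZero K := by
    have : CharZero (MvPolynomial σ k) := inferInstance
    exact charZero_of_injective_algebraMap (IsFractionRing.injective (MvPolynomial σ k) K)
  have : Algebra.FormallyEtale (MvPolynomial σ k) K :=
    Algebra.FormallyEtale.of_isLocalization (nonZeroDivisors (MvPolynomial σ k))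
  have : Algebra.FormallyEtale K L := Algebra.FormallyEtale.of_isSeparable K L
  have : Algebra.FormallyEtale (MvPolynomial σ k) L := Algebra.FormallyEtale.comp _ K L
  let d' : Derivation k (MvPolynomial σ k) L := (Algebra.linearMap (MvPolynomial σ k) L).compDer d
  let φ := d'.liftKaehlerDifferential
  let ψ := φ.liftBaseChange L
  let e := KaehlerDifferential.tensorKaehlerEquivOfFormallyEtale k (MvPolynomial σ k) L
  refine ⟨(ψ ∘ₗ e.symm.toLinearMap).compDer (KaehlerDifferential.D k L), fun r => ?_⟩
  have h1 : e.symm (KaehlerDifferential.D k L (algebraMap (MvPolynomial σ k) L r)) =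
      1 ⊗ₜ[MvPolynomial σ k] KaehlerDifferential.D k _ r :=
    KaehlerDifferential.tensorKaehlerEquivOfFormallyEtale_symm_D_algebraMap k _ L r
  change ψ (e.symm (KaehlerDifferential.D k L (algebraMap (MvPolynomial σ k) L r))) = _
  rw [h1]
  simp only [ψ, LinearMap.liftBaseChange_tmul, one_smul, φ,
    Derivation.liftKaehlerDifferential_comp_D]
  simp [d']

lemma eq_C_of_pderiv (p : MvPolynomial σ k) (hp : ∀ i, pderiv i p = 0) :
    ∃ c, p = C c := by
  classical
  refine ⟨coeff 0 p, ?_⟩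
  ext m
  rw [coeff_C]
  split_ifs with h
  · rw [← h]
  · obtain ⟨i, hi⟩ : ∃ i, m i ≠ 0 := by
      by_contra! h'
      exact h (Finsupp.ext (fun i => by simp [h' i]))
    have h1 := coeff_pderiv (i := i) p (m - Finsupp.single i 1)
    rw [hp, coeff_zero] at h1
    have h2 : m - Finsupp.single i 1 + Finsupp.single i 1 = m := by
      ext j
      by_cases hj : i = j
      · subst hj; simp; omega
      · simp [Finsupp.single_eq_of_ne' hj]
    rw [h2] at h1
    have h3 : (((m - Finsupp.single i 1 : σ →₀ ℕ) i : k) + 1) ≠ 0 := by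
      exact_mod_cast Nat.succ_ne_zero ((m - (Finsupp.single i 1 : σ →₀ ℕ)) i)
    exact (mul_eq_zero.mp h1.symm).resolve_right h3


/-- chain rule -/
lemma D_aeval {R : Type*} [CommRing R] [Algebra k R] [Algebra R L]
    (d : Derivation k R R) (D : Derivation k L L)
    (hD : ∀ r, D (algebraMap R L r) = algebraMap _ L (d r)) (b : L) (p : Polynomial R) :
    ∃ q : Polynomial R, (∀ i, q.coeff i = d (p.coeff i)) ∧
    D (Polynomial.aeval b p) = Polynomial.aeval b q
      + Polynomial.aeval b p.derivative * D b := by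
  induction p using Polynomial.induction_on' with
  | add p p' hp hp' =>
    obtain ⟨q, hq, h⟩ := hp
    obtain ⟨q', hq', h'⟩ := hp'
    refine ⟨q + q', fun i => by simp [hq, hq'], ?_⟩
    simp only [map_add, h, h']
    ring
  | monomial n a =>
    refine ⟨Polynomial.monomial n (d a), fun i => ?_, ?_⟩
    · rw [Polynomial.coeff_monomial, Polynomial.coeff_monomial]; split_ifs <;> simp
    · rw [Polynomial.derivative_monomial]
      simp only [Polynomial.aeval_monomial, Derivation.leibniz, hD, Derivation.leibniz_pow,
        smul_eq_mul, nsmul_eq_mul, map_mul, map_natCast]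
      ring

lemma minpoly_core {R : Type*} [CommRing R] [IsDomain R] [IsIntegrallyClosed R]
    [Algebra k R] [Algebra R L] [Module.IsTorsionFree R L]
    (d : Derivation k R R) (D : Derivation k L L)
    (hD : ∀ r, D (algebraMap R L r) = algebraMap _ L (d r)) (b : L) (hb : IsIntegral R b)
    (r : R) (hr : D b = algebraMap R L r) (i : ℕ) :
    d ((minpoly R b).coeff i) + (minpoly R b).coeff (i + 1) * (i + 1) * r = 0 := by
  set p := minpoly R b with hp
  obtain ⟨q, hq, h⟩ := D_aeval d D hD b p
  have hm : p.Monic := minpoly.monic hb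
  have h0 : Polynomial.aeval b (q + p.derivative * Polynomial.C r) = 0 := by
    rw [map_add, map_mul, Polynomial.aeval_C, ← hr, ← h, hp, minpoly.aeval, map_zero]
  have hc : ∀ i, (q + p.derivative * Polynomial.C r).coeff i =
      d (p.coeff i) + p.coeff (i + 1) * (i + 1) * r := by
    intro i
    rw [Polynomial.coeff_add, Polynomial.coeff_mul_C, hq, Polynomial.coeff_derivative]
  have hz : q + p.derivative * Polynomial.C r = 0 := by
    by_contra hne
    have h1 := minpoly.IsIntegrallyClosed.degree_le_of_ne_zero hne h0
    have h2 : (q + p.derivative * Polynomial.C r).degree < p.degree := by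
      rw [Polynomial.degree_eq_natDegree hm.ne_zero, Polynomial.degree_lt_iff_coeff_zero]
      intro m hm'
      rw [hc, Polynomial.coeff_eq_zero_of_natDegree_lt (show p.natDegree < m + 1 by omega)]
      rcases hm'.eq_or_lt with h | h
      · rw [← h, hm.coeff_natDegree]; simp
      · rw [Polynomial.coeff_eq_zero_of_natDegree_lt h]; simp
    exact absurd h1 (not_le.mpr h2)
  rw [← hc, hz, Polynomial.coeff_zero]

variable (D : σ → Derivation k L L)

lemma mem_of_deriv_zero [IsAlgClosed k] [Module.IsTorsionFree (MvPolynomial σ k) L]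
    (hD : ∀ i r, D i (algebraMap (MvPolynomial σ k) L r) = algebraMap _ L (pderiv i r))
    (b : L) (hb : IsIntegral (MvPolynomial σ k) b) (h : ∀ i, D i b = 0) :
    ∃ r : k, algebraMap k L r = b := by
  have h1 : ∀ j, ∃ c, (minpoly (MvPolynomial σ k) b).coeff j = C c := by
    intro j
    apply eq_C_of_pderiv
    intro i
    have := minpoly_core (pderiv i) (D i) (hD i) b hb 0 (by simp [h i]) j
    simpa using this
  have h2 : minpoly (MvPolynomial σ k) b ∈ Polynomial.lifts (C : k →+* MvPolynomial σ k) := by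
    rw [Polynomial.lifts_iff_coeff_lifts]
    intro j
    obtain ⟨c, hc⟩ := h1 j
    exact ⟨c, hc.symm⟩
  obtain ⟨q, hq, -, hqm⟩ := Polynomial.lifts_and_degree_eq_and_monic h2 (minpoly.monic hb)
  have hint : IsIntegral k b := by
    refine ⟨q, hqm, ?_⟩
    have := minpoly.aeval (MvPolynomial σ k) b
    rw [← hq, Polynomial.aeval_def, Polynomial.eval₂_map] at this
    rwa [IsScalarTower.algebraMap_eq k (MvPolynomial σ k) L]
  have := minpoly.mem_range_of_degree_eq_one k b
    (IsAlgClosed.degree_eq_one_of_irreducible k (minpoly.irreducible hint))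
  simpa using this

lemma mem_of_deriv [IsAlgClosed k] [Module.IsTorsionFree (MvPolynomial σ k) L]
    (hD : ∀ i r, D i (algebraMap (MvPolynomial σ k) L r) = algebraMap _ L (pderiv i r))
    (b : L) (hb : IsIntegral (MvPolynomial σ k) b)
    (h : ∀ i, ∃ r : MvPolynomial σ k, algebraMap _ L r = D i b) :
    ∃ r : MvPolynomial σ k, algebraMap _ L r = b := by
  set p := minpoly (MvPolynomial σ k) b with hp
  have hm : p.Monic := minpoly.monic hb
  have hpos : 0 < p.natDegree := minpoly.natDegree_pos hb
  obtain ⟨N, hN⟩ : ∃ N, p.natDegree = N + 1 := ⟨p.natDegree - 1, by omega⟩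
  have hN0 : ((N : k) + 1) ≠ 0 := by exact_mod_cast Nat.succ_ne_zero N
  let s : MvPolynomial σ k := C ((N + 1 : k)⁻¹) * p.coeff N
  obtain ⟨c, hc⟩ := mem_of_deriv_zero D hD (b + algebraMap _ L s)
    (hb.add isIntegral_algebraMap) (by
      intro i
      obtain ⟨r, hr⟩ := h i
      have h1 := minpoly_core (pderiv i) (D i) (hD i) b hb r hr.symm N
      rw [← hp, ← hN, hm.coeff_natDegree, one_mul] at h1
      rw [map_add, hD, ← hr, ← map_add]
      convert map_zero (algebraMap (MvPolynomial σ k) L)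
      simp only [s]
      rw [pderiv_C_mul]
      have h2 : pderiv i (p.coeff N) = - (C ((N : k) + 1) * r) := by
        rw [map_add, map_natCast, map_one]
        linear_combination h1
      rw [h2, mul_neg, ← mul_assoc, ← C_mul, inv_mul_cancel₀ hN0]
      simp)
  refine ⟨C c - s, ?_⟩
  rw [map_sub, ← MvPolynomial.algebraMap_eq, ← IsScalarTower.algebraMap_apply, hc]
  ring


lemma minpoly_coeff_smul (A K : Type*) [CommRing A] [IsDomain A] [IsIntegrallyClosed A] [Field K]
    [Algebra A K] [IsFractionRing A K] [Algebra K L] [Algebra A L] [IsScalarTower A K L]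
    (b : L) (hb : IsIntegral K b) (r : K) (hr : r ≠ 0) (h : IsIntegral A (r • b)) (i : ℕ) :
    ∃ a : A, algebraMap A K a =
      (minpoly K b).coeff i * r ^ ((minpoly K b).natDegree - i) := by
  have h1 := IsIntegrallyClosed.minpoly_smul hr hb
  rw [minpoly.isIntegrallyClosed_eq_field_fractions' K h] at h1
  refine ⟨(minpoly A (r • b)).coeff i, ?_⟩
  rw [← Polynomial.coeff_scaleRoots, ← h1, Polynomial.coeff_map]

/-- coprime division for integrality -/
lemma integral_div (g h : MvPolynomial σ k)
    (hg0 : g ≠ 0) (hh0 : h ≠ 0) (hgh : IsRelPrime g h) (b : L)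
    (h1 : IsIntegral (MvPolynomial σ k) (algebraMap _ L h * b))
    (h2 : IsIntegral (MvPolynomial σ k) (algebraMap _ L g * b)) :
    IsIntegral (MvPolynomial σ k) b := by
  let K := FractionRing (MvPolynomial σ k)
  have hinj : Function.Injective (algebraMap (MvPolynomial σ k) K) := IsFractionRing.injective _ _
  have hb : IsIntegral K b := Algebra.IsIntegral.isIntegral b
  have hm : (minpoly K b).Monic := minpoly.monic hb
  have key : ∀ q : MvPolynomial σ k, q ≠ 0 → IsIntegral (MvPolynomial σ k) (algebraMap _ L q * b) →
      ∀ i, ∃ a : MvPolynomial σ k, algebraMap _ K a =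
        (minpoly K b).coeff i * (algebraMap _ K q) ^ ((minpoly K b).natDegree - i) := by
    intro q hq hi i
    apply minpoly_coeff_smul (MvPolynomial σ k) K b hb
    · simpa using hq
    · rwa [Algebra.smul_def, ← IsScalarTower.algebraMap_apply]
  have lift : minpoly K b ∈ Polynomial.lifts (algebraMap (MvPolynomial σ k) K) := by
    rw [Polynomial.lifts_iff_coeff_lifts]
    intro i
    obtain ⟨a1, ha1⟩ := key h hh0 h1 i
    obtain ⟨a2, ha2⟩ := key g hg0 h2 i
    generalize (minpoly K b).natDegree - i = j at ha1 ha2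
    have e : a1 * g ^ j = a2 * h ^ j := by
      apply hinj
      rw [map_mul, map_mul, ha1, ha2, map_pow, map_pow]
      ring
    have hd : h ^ j ∣ a1 := by
      have hr : IsRelPrime (h ^ j) (g ^ j) := (IsRelPrime.pow hgh.symm)
      exact hr.dvd_of_dvd_mul_right ⟨a2, by rw [e]; ring⟩
    obtain ⟨c, rfl⟩ := hd
    refine ⟨c, ?_⟩
    have hj : algebraMap (MvPolynomial σ k) K h ^ j ≠ 0 := pow_ne_zero _ (by simpa using hh0)
    apply mul_left_cancel₀ hj
    rw [← map_pow, ← map_mul, ha1, map_pow]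
    ring
  obtain ⟨q, hq, -, hqm⟩ := Polynomial.lifts_and_degree_eq_and_monic lift hm
  refine ⟨q, hqm, ?_⟩
  have := minpoly.aeval K b
  rw [← hq, Polynomial.aeval_def, Polynomial.eval₂_map] at this
  rwa [IsScalarTower.algebraMap_eq (MvPolynomial σ k) K L]

lemma closed_of_val (A K : Type*) [CommRing A] [IsDomain A] [ValuationRing A] [Field K]
    [Algebra A K] [IsFractionRing A K] : IsIntegrallyClosed A := by
  have hv : (ValuationRing.valuation A K).Integers A :=
    ⟨IsFractionRing.injective A K,
      fun x => (ValuationRing.mem_integer_iff A K _).mpr ⟨x, rfl⟩,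
      fun x hx => (ValuationRing.mem_integer_iff A K _).mp hx⟩
  exact hv.isIntegrallyClosed

section infty
variable (k σ)
/-- the ring of fractions of degree at most zero -/
def Oinf : Subalgebra k (FractionRing (MvPolynomial σ k)) where
  carrier := {x | ∃ p q : MvPolynomial σ k, q ≠ 0 ∧ p.totalDegree ≤ q.totalDegree ∧
    x = algebraMap _ _ p / algebraMap _ _ q}
  mul_mem' := by
    rintro _ _ ⟨p, q, hq, hd, rfl⟩ ⟨p', q', hq', hd', rfl⟩
    refine ⟨p * p', q * q', mul_ne_zero hq hq', ?_, ?_⟩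
    · rw [totalDegree_mul_of_isDomain hq hq']
      exact (totalDegree_mul _ _).trans (add_le_add hd hd')
    · rw [map_mul, map_mul, div_mul_div_comm]
  add_mem' := by
    rintro _ _ ⟨p, q, hq, hd, rfl⟩ ⟨p', q', hq', hd', rfl⟩
    refine ⟨p * q' + q * p', q * q', mul_ne_zero hq hq', ?_, ?_⟩
    · rw [totalDegree_mul_of_isDomain hq hq']
      refine (totalDegree_add _ _).trans (max_le ?_ ?_)
      · exact (totalDegree_mul _ _).trans (add_le_add hd le_rfl)
      · exact (totalDegree_mul _ _).trans (add_le_add le_rfl hd')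
    · rw [map_mul, map_add, map_mul, map_mul, div_add_div]
      · simpa using hq
      · simpa using hq'
  algebraMap_mem' := by
    intro r
    refine ⟨C r, 1, one_ne_zero, by simp, ?_⟩
    rw [map_one, div_one, ← MvPolynomial.algebraMap_eq, ← IsScalarTower.algebraMap_apply]

instance : IsFractionRing (Oinf k σ) (FractionRing (MvPolynomial σ k)) := by
  apply IsFractionRing.of_field
  intro z
  obtain ⟨p, q, hq, rfl⟩ := IsFractionRing.div_surjective (MvPolynomial σ k) z
  have hq0 : q ≠ 0 := nonZeroDivisors.ne_zero hq
  by_cases hp0 : p = 0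
  · exact ⟨0, 1, by simp [hp0]⟩
  rcases le_total p.totalDegree q.totalDegree with h | h
  · refine ⟨⟨_, p, q, hq0, h, rfl⟩, 1, by simp⟩
  · refine ⟨1, ⟨_, q, p, hp0, h, rfl⟩, ?_⟩
    rw [map_one, one_div]
    exact (inv_div _ _).symm

instance : ValuationRing (Oinf k σ) := by
  rw [ValuationRing.iff_isInteger_or_isInteger _ (FractionRing (MvPolynomial σ k))]
  intro z
  obtain ⟨p, q, hq, rfl⟩ := IsFractionRing.div_surjective (MvPolynomial σ k) z
  have hq0 : q ≠ 0 := nonZeroDivisors.ne_zero hq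
  by_cases hp0 : p = 0
  · exact Or.inl ⟨0, by simp [hp0]⟩
  rcases le_total p.totalDegree q.totalDegree with h | h
  · exact Or.inl ⟨⟨_, p, q, hq0, h, rfl⟩, rfl⟩
  · refine Or.inr ⟨⟨_, q, p, hp0, h, rfl⟩, ?_⟩
    rw [inv_div]
    rfl

instance : IsIntegrallyClosed (Oinf k σ) := closed_of_val (Oinf k σ) (FractionRing (MvPolynomial σ k))
variable {k σ}

lemma zero_of_integral (t : MvPolynomial σ k) (ht : t.totalDegree ≠ 0) (b : L)
    (h1 : IsIntegral (MvPolynomial σ k) b)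
    (h2 : IsIntegral (Oinf k σ) (algebraMap _ L t * b)) : b = 0 := by
  let K := FractionRing (MvPolynomial σ k)
  have hb : IsIntegral K b := Algebra.IsIntegral.isIntegral b
  have hm : (minpoly K b).Monic := minpoly.monic hb
  have ht0 : t ≠ 0 := by rintro rfl; simp at ht
  have hinj : Function.Injective (algebraMap (MvPolynomial σ k) K) := IsFractionRing.injective _ _
  have hc : ∀ i < (minpoly K b).natDegree, (minpoly K b).coeff i = 0 := by
    intro i hi
    obtain ⟨a1, ha1⟩ := minpoly_coeff_smul (MvPolynomial σ k) K b hb 1 one_ne_zero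
      (by rwa [one_smul]) i
    rw [one_pow, mul_one] at ha1
    obtain ⟨⟨_, p, q, hq, hd, rfl⟩, ha2⟩ := minpoly_coeff_smul (Oinf k σ) K b hb (algebraMap _ K t)
      (by simpa using ht0)
      (by rwa [Algebra.smul_def, ← IsScalarTower.algebraMap_apply]) i
    obtain ⟨j, hj⟩ : ∃ j, (minpoly K b).natDegree - i = j + 1 := ⟨_, (Nat.succ_pred_eq_of_pos (by omega)).symm⟩
    rw [hj, ← ha1] at ha2
    change algebraMap _ K p / algebraMap _ K q = _ at ha2
    rw [div_eq_iff (by simpa using hq), ← map_pow, ← map_mul, ← map_mul] at ha2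
    have e := hinj ha2
    by_contra hne
    have ha0 : a1 ≠ 0 := by
      rintro rfl; apply hne; rw [← ha1, map_zero]
    rw [e, totalDegree_mul_of_isDomain (mul_ne_zero ha0 (pow_ne_zero _ ht0)) hq,
      totalDegree_mul_of_isDomain ha0 (pow_ne_zero _ ht0), pow_succ,
      totalDegree_mul_of_isDomain (pow_ne_zero _ ht0) ht0] at hd
    omega
  have hX : minpoly K b = Polynomial.X ^ (minpoly K b).natDegree := by
    ext i
    rw [Polynomial.coeff_X_pow]
    split_ifs with h
    · rw [h, hm.coeff_natDegree]
    · rcases lt_or_gt_of_ne h with h | h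
      · exact hc i h
      · exact Polynomial.coeff_eq_zero_of_natDegree_lt h
  have := minpoly.aeval K b
  rw [hX] at this
  simp only [map_pow, Polynomial.aeval_X] at this
  exact eq_zero_of_pow_eq_zero this

end infty

end conc
end Iit

namespace Iit
open MvPolynomial TensorProduct
set_option linter.unusedSectionVars false

section fin
variable {k : Type*} [Field k] [CharZero k] {σ : Type*}

lemma deg_pow (p : MvPolynomial σ k) (hp : p ≠ 0) (n : ℕ) :
    (p ^ n).totalDegree = n * p.totalDegree := by
  induction n with
  | zero => simp
  | succ n ih => rw [pow_succ, totalDegree_mul_of_isDomain (pow_ne_zero _ hp) hp, ih]; ring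

lemma deg_pderiv (p : MvPolynomial σ k) (i : σ) (h : pderiv i p ≠ 0) :
    (pderiv i p).totalDegree + 1 ≤ p.totalDegree := by
  classical
  obtain ⟨m, hm, hd⟩ : ∃ m ∈ (pderiv i p).support, (pderiv i p).totalDegree = m.sum fun _ e => e := by
    have := Finset.exists_mem_eq_sup (pderiv i p).support (by simpa using h)
      (fun m => m.sum fun _ e => e)
    simpa [totalDegree] using this
  rw [mem_support_iff, coeff_pderiv] at hm
  have h1 : m + Finsupp.single i 1 ∈ p.support := by
    rw [mem_support_iff]; exact left_ne_zero_of_mul hm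
  have h2 := le_totalDegree h1
  rw [hd]
  refine le_trans (le_of_eq ?_) h2
  rw [Finsupp.sum_add_index' (by simp) (by simp)]
  simp

variable {L : Type*} [Field L] [Algebra (FractionRing (MvPolynomial σ k)) L] [Algebra (MvPolynomial σ k) L]
  [IsScalarTower (MvPolynomial σ k) (FractionRing (MvPolynomial σ k)) L]
  [Algebra.IsAlgebraic (FractionRing (MvPolynomial σ k)) L]
  [Algebra k L] [IsScalarTower k (MvPolynomial σ k) L]

instance tower_Oinf : IsScalarTower k (Oinf k σ) L := by
  apply IsScalarTower.of_algebraMap_eq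
  intro x
  change _ = algebraMap (FractionRing (MvPolynomial σ k)) L (algebraMap k (FractionRing (MvPolynomial σ k)) x)
  rw [IsScalarTower.algebraMap_apply k (MvPolynomial σ k) L,
    IsScalarTower.algebraMap_apply k (MvPolynomial σ k) (FractionRing (MvPolynomial σ k)),
    IsScalarTower.algebraMap_apply (MvPolynomial σ k) (FractionRing (MvPolynomial σ k)) L]

variable (k σ L) in
/-- integral closure of the ring at infinity -/
noncomputable def Vinf : Subalgebra k L := (integralClosure (Oinf k σ) L).restrictScalars k

variable (k σ L) in
/-- integral closure of the polynomial ring -/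
noncomputable def Caff : Subalgebra k L := (integralClosure (MvPolynomial σ k) L).restrictScalars k

lemma mem_Vinf {x : L} : x ∈ Vinf k σ L ↔ IsIntegral (Oinf k σ) x := Iff.rfl
lemma mem_Caff {x : L} : x ∈ Caff k σ L ↔ IsIntegral (MvPolynomial σ k) x := Iff.rfl

lemma closed_ic (A L : Type*) [CommRing A] [Field L] [Algebra A L] (x : L)
    (h : IsIntegral (integralClosure A L) x) : IsIntegral A x := isIntegral_trans x h

lemma Vinf_closed (x : L) (h : IsIntegral (Vinf k σ L) x) : x ∈ Vinf k σ L := by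
  exact closed_ic (Oinf k σ) L x h

lemma Caff_closed (x : L) (h : IsIntegral (Caff k σ L) x) : x ∈ Caff k σ L := by
  exact closed_ic (MvPolynomial σ k) L x h

lemma Vinf_pow (x : L) (n : ℕ) (hn : 0 < n) (h : x ^ n ∈ Vinf k σ L) : x ∈ Vinf k σ L :=
  IsIntegral.of_pow hn (mem_Vinf.mp h)

lemma Vinf_frac (p q : MvPolynomial σ k) (hq : q ≠ 0) (h : p.totalDegree ≤ q.totalDegree) :
    (algebraMap _ L p) / algebraMap _ L q ∈ Vinf k σ L := by
  rw [mem_Vinf]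
  have : (algebraMap _ L p) / algebraMap _ L q =
      algebraMap (Oinf k σ) L ⟨_, p, q, hq, h, rfl⟩ := by
    change _ = algebraMap (FractionRing (MvPolynomial σ k)) L
      (algebraMap _ (FractionRing (MvPolynomial σ k)) p / algebraMap _ (FractionRing (MvPolynomial σ k)) q)
    rw [map_div₀, ← IsScalarTower.algebraMap_apply, ← IsScalarTower.algebraMap_apply]
  rw [this]
  exact isIntegral_algebraMap

lemma inj_RL : Function.Injective (algebraMap (MvPolynomial σ k) L) := by
  rw [IsScalarTower.algebraMap_eq _ (FractionRing (MvPolynomial σ k)) L]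
  exact (algebraMap (FractionRing (MvPolynomial σ k)) L).injective.comp
    (IsFractionRing.injective _ _)

variable (D : σ → Derivation k L L)
    (hD : ∀ i r, D i (algebraMap (MvPolynomial σ k) L r) = algebraMap _ L (pderiv i r))

lemma D_t (hD : ∀ i r, D i (algebraMap (MvPolynomial σ k) L r) = algebraMap _ L (pderiv i r))
    (i0 i : σ) :
    ∃ δ : k, D i (algebraMap _ L (X i0 : MvPolynomial σ k)) = algebraMap k L δ ∧
      pderiv i (X i0 : MvPolynomial σ k) = C δ := by
  classical
  refine ⟨if i0 = i then 1 else 0, ?_, ?_⟩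
  · rw [hD, pderiv_X, Pi.single_apply]; split_ifs <;> simp_all
  · rw [pderiv_X, Pi.single_apply]; split_ifs <;> simp_all

lemma induct [IsAlgClosed k] [Module.IsTorsionFree (MvPolynomial σ k) L]
    (hD : ∀ i r, D i (algebraMap (MvPolynomial σ k) L r) = algebraMap _ L (pderiv i r))
    (i0 : σ) (t : L) (ht : t = algebraMap _ L (X i0 : MvPolynomial σ k)) (ht0 : t ≠ 0)
    (m : ℕ) : ∀ b : L, (∀ j, b ∈ lev (Caff k σ L) D j) →
      (∀ j, t * t⁻¹ ^ m * b ∈ lev (Vinf k σ L) (fun i => t • D i) j) →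
      ∃ r : MvPolynomial σ k, algebraMap _ L r = b := by
  induction m with
  | zero =>
    intro b h1 h2
    refine ⟨0, ?_⟩
    rw [map_zero]
    symm
    apply zero_of_integral (X i0 : MvPolynomial σ k) (by simp) b
    · exact h1 0
    · have := h2 0
      rw [pow_zero, mul_one, ht] at this
      exact this
  | succ m ih =>
    intro b h1 h2
    apply mem_of_deriv D hD b (h1 0)
    intro i
    apply ih
    · exact fun j => (h1 (j+1)).2 i
    · intro j
      obtain ⟨δ, hδ, -⟩ := D_t D hD i0 i
      rw [← ht] at hδ
      have e : ∀ x : L, t * t⁻¹ ^ (m + 1) * x = t⁻¹ ^ m * x := by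
        intro x; rw [pow_succ]; field_simp
      have h3 := (h2 (j+1)).2 i
      have h4 := h2 j
      rw [e] at h3 h4
      change t • D i (t⁻¹ ^ m * b) ∈ _ at h3
      have h5 : t * t⁻¹ ^ m * D i b = t • D i (t⁻¹ ^ m * b) +
          algebraMap k L (m * δ) * (t⁻¹ ^ m * b) := by
        rw [Derivation.leibniz, Derivation.leibniz_pow, Derivation.leibniz_inv, hδ]
        simp only [smul_eq_mul, nsmul_eq_mul, map_mul, map_natCast]
        rcases m with _ | m
        · simp
        · simp only [Nat.add_sub_cancel]
          have hts : t * t⁻¹ = 1 := mul_inv_cancel₀ ht0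
          linear_combination ((m + 1 : ℕ) : L) * algebraMap k L δ * b * t⁻¹ ^ (m + 1) * hts
      rw [h5]
      exact add_mem h3 (mul_mem (algebraMap_mem _ _) h4)

lemma stab (hD : ∀ i r, D i (algebraMap (MvPolynomial σ k) L r) = algebraMap _ L (pderiv i r))
    (i0 : σ) (t S : L) (ht : t = algebraMap _ L (X i0 : MvPolynomial σ k)) 
    (hS : S ^ 60 * t = 1) (m j : ℕ) (p : MvPolynomial σ k) (hp : 60 * p.totalDegree ≤ j) :
    S ^ j * algebraMap _ L p ∈ lev (Vinf k σ L) (fun i => t • D i) m := by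
  have ht0 : t ≠ 0 := right_ne_zero_of_mul_eq_one hS
  have hS0 : S ≠ 0 := by rintro rfl; simp at hS
  have hS1 : S ^ 60 = t⁻¹ := eq_inv_of_mul_eq_one_left hS
  apply lev_of_stable _ _ {x | ∃ p : MvPolynomial σ k, 60 * p.totalDegree ≤ j ∧ x = S ^ j * algebraMap _ L p}
  · rintro _ ⟨p, hp, rfl⟩
    apply Vinf_pow _ 60 (by norm_num)
    have : (S ^ j * algebraMap _ L p) ^ 60 =
        algebraMap _ L (p ^ 60) / algebraMap _ L ((X i0 : MvPolynomial σ k) ^ j) := by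
      rw [mul_pow, ← pow_mul, mul_comm j, pow_mul, hS1, map_pow, map_pow, ← ht, inv_pow]
      field_simp
    rw [this]
    apply Vinf_frac
    · exact pow_ne_zero _ (X_ne_zero _)
    · rw [totalDegree_X_pow]
      exact (totalDegree_pow _ _).trans hp
  · rintro _ ⟨p, hp, rfl⟩ i
    obtain ⟨δ, hδ, -⟩ := D_t D hD i0 i
    rw [← ht] at hδ
    refine ⟨X i0 * pderiv i p - C (j * δ / 60) * p, ?_, ?_⟩
    · refine le_trans (Nat.mul_le_mul_left _ ?_) hp
      refine (totalDegree_sub _ _).trans (max_le ?_ ?_)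
      · by_cases h0 : pderiv i p = 0
        · simp [h0]
        · refine (totalDegree_mul _ _).trans ?_
          rw [totalDegree_X, add_comm]
          exact deg_pderiv p i h0
      · refine (totalDegree_mul _ _).trans ?_
        simp
    · have e1 : 60 * (t * D i S) = - (S * algebraMap k L δ) := by
        have := congrArg (D i) hS
        rw [Derivation.leibniz, Derivation.leibniz_pow, hδ, Derivation.map_one_eq_zero] at this
        simp only [smul_eq_mul, nsmul_eq_mul] at this
        have h59 : S ^ 59 ≠ 0 := pow_ne_zero _ hS0
        apply mul_left_cancel₀ h59
        push_cast at this
        linear_combination this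
      change t • D i (S ^ j * algebraMap _ L p) = _
      have hCL : ∀ x : k, algebraMap (MvPolynomial σ k) L (C x) = algebraMap k L x := by
        intro x
        rw [← MvPolynomial.algebraMap_eq, ← IsScalarTower.algebraMap_apply]
      rw [Derivation.leibniz, Derivation.leibniz_pow, hD, map_sub, map_mul, map_mul, hCL, ← ht]
      have e2 : t * D i S = - (S * algebraMap k L (δ / 60)) := by
        have c60 : (60 : L) = algebraMap k L 60 := (map_ofNat _ 60).symm
        have c0 : algebraMap k L 60 ≠ 0 := (map_ne_zero _).mpr (by norm_num)
        apply mul_left_cancel₀ c0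
        rw [c60] at e1
        rw [e1, map_div₀]
        field_simp
      have e3 : algebraMap k L (j * δ / 60) = j * algebraMap k L (δ / 60) := by
        rw [mul_div_assoc, map_mul, map_natCast]
      rw [e3]
      simp only [smul_eq_mul, nsmul_eq_mul]
      rcases j with _ | j
      · simp
      · simp only [Nat.add_sub_cancel]
        linear_combination (algebraMap _ L p * ((j + 1 : ℕ) : L) * S ^ j) * e2
  · exact ⟨p, hp, rfl⟩

lemma unit_inf (i0 : σ) (t S : L) (ht : t = algebraMap _ L (X i0 : MvPolynomial σ k)) 
    (hS : S ^ 60 * t = 1) (j : ℕ) (p : MvPolynomial σ k) (hp0 : p ≠ 0) (hp : 60 * p.totalDegree = j) :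
    (S ^ j * algebraMap _ L p)⁻¹ ∈ Vinf k σ L := by
  have hS1 : S ^ 60 = t⁻¹ := eq_inv_of_mul_eq_one_left hS
  have ht0 : t ≠ 0 := right_ne_zero_of_mul_eq_one hS
  apply Vinf_pow _ 60 (by norm_num)
  have : ((S ^ j * algebraMap _ L p)⁻¹) ^ 60 =
      algebraMap _ L ((X i0 : MvPolynomial σ k) ^ j) / algebraMap _ L (p ^ 60)  := by
    rw [inv_pow, mul_pow, ← pow_mul, mul_comm j, pow_mul, hS1, map_pow, map_pow, ← ht, inv_pow, mul_inv,
      inv_inv, div_eq_mul_inv]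
  rw [this]
  apply Vinf_frac
  · exact pow_ne_zero _ hp0
  · rw [totalDegree_X_pow, deg_pow _ hp0, hp]
end fin

section fin2
variable {k : Type*} [Field k] [CharZero k] [IsAlgClosed k] {σ : Type*}

lemma klein_poly (i0 : σ) (f g h : MvPolynomial σ k) (hf : f ≠ 0) (hg : g ≠ 0) (hh : h ≠ 0)
    (hgh : IsRelPrime g h) (rel : h ^ 2 + g ^ 3 = 1728 * f ^ 5) :
    ∃ u v : MvPolynomial σ k, u * v * (u ^ 10 + 11 * u ^ 5 * v ^ 5 - v ^ 10) = f := by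
  let R := MvPolynomial σ k
  let K := FractionRing R
  let L := AlgebraicClosure K
  have inj : Function.Injective (algebraMap R L) := inj_RL
  have : CharZero L := charZero_of_injective_algebraMap (algebraMap k L).injective
  have : Module.IsTorsionFree R L := by
    rw [Module.isTorsionFree_iff_algebraMap_injective]; exact inj
  have hne : ∀ p : R, p ≠ 0 → algebraMap R L p ≠ 0 := fun p hp => by
    rwa [Ne, map_eq_zero_iff _ inj]
  obtain ⟨u, v, ef, eg, eh⟩ := klein_surj (algebraMap R L f) (algebraMap R L g) (algebraMap R L h)
    (hne f hf) (hne g hg) (hne h hh)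
    (by rw [← map_pow, ← map_pow, ← map_add, rel, map_mul, map_pow, map_ofNat])
  choose D hD using fun i : σ => exists_der (k := k) L (pderiv i)
  -- affine side
  have affp : ∀ (p : R) m, algebraMap R L p ∈ lev (Caff k σ L) D m := by
    intro p m
    apply lev_of_stable _ _ (Set.range (algebraMap R L))
    · rintro _ ⟨p, rfl⟩; exact isIntegral_algebraMap
    · rintro _ ⟨p, rfl⟩ i; exact ⟨_, (hD i p).symm⟩
    · exact ⟨p, rfl⟩
  have Paff : ∀ b : L, algebraMap R L h * b ∈ Caff k σ L → (algebraMap R L g) ^ 2 * b ∈ Caff k σ L →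
      b ∈ Caff k σ L := by
    intro b h1 h2
    apply integral_div (g ^ 2) h (pow_ne_zero _ hg) hh hgh.pow_left b h1
    rw [map_pow]; exact h2
  have affu := fun m => klein_lev (Caff k σ L) D Caff_closed _ _ _ (affp f) (affp g) (affp h) Paff m
  -- infinity
  let t : L := algebraMap R L (X i0)
  have ht0 : t ≠ 0 := hne _ (X_ne_zero _)
  obtain ⟨S, hS'⟩ := IsAlgClosed.exists_pow_nat_eq t⁻¹ (show 0 < 60 by norm_num)
  have hS : S ^ 60 * t = 1 := by rw [hS', inv_mul_cancel₀ ht0]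
  let Θ : σ → Derivation k L L := fun i => t • D i
  obtain ⟨N, hNf, hNg, hNh, hN⟩ : ∃ N, 5 * f.totalDegree ≤ N ∧ 3 * g.totalDegree ≤ N ∧
      2 * h.totalDegree ≤ N ∧ (2 * h.totalDegree = N ∨ 3 * g.totalDegree = N) := by
    refine ⟨max (2 * h.totalDegree) (3 * g.totalDegree), ?_, le_max_right _ _, le_max_left _ _, ?_⟩
    · have h1 : (1728 * f ^ 5 : R).totalDegree = 5 * f.totalDegree := by
        have : (1728 : R) = C 1728 := (map_ofNat C 1728).symm
        rw [this, totalDegree_mul_of_isDomain (by simp) (pow_ne_zero _ hf), deg_pow _ hf]; simp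
      rw [← h1, ← rel, ← deg_pow _ hh, ← deg_pow _ hg]
      exact totalDegree_add _ _
    · omega
  have sf := fun m => stab D hD i0 t S rfl hS m (12 * N) f (by omega)
  have sg := fun m => stab D hD i0 t S rfl hS m (20 * N) g (by omega)
  have sh := fun m => stab D hD i0 t S rfl hS m (30 * N) h (by omega)
  have sS := fun m => stab D hD i0 t S rfl hS m 1 1 (by simp)
  simp only [pow_one, map_one, mul_one] at sS
  have hS0 : S ≠ 0 := by rintro rfl; simp at hS
  have Pinf : ∀ b : L, (S ^ (30 * N) * algebraMap R L h) * b ∈ Vinf k σ L →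
      (S ^ (20 * N) * algebraMap R L g) ^ 2 * b ∈ Vinf k σ L → b ∈ Vinf k σ L := by
    intro b h1 h2
    rcases hN with h3 | h3
    · have := unit_inf i0 t S rfl hS (30 * N) h hh (by omega)
      have h4 := mul_mem this h1
      rwa [inv_mul_cancel_left₀ (mul_ne_zero (pow_ne_zero _ hS0) (hne h hh))] at h4
    · have := unit_inf i0 t S rfl hS (20 * N) g hg (by omega)
      have h4 := mul_mem (pow_mem this 2) h2
      rwa [inv_pow, inv_mul_cancel_left₀ (pow_ne_zero _ (mul_ne_zero (pow_ne_zero _ hS0) (hne g hg)))] at h4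
  have infu := fun m => klein_lev (Vinf k σ L) Θ Vinf_closed _ _ _ sf sg sh Pinf m
  have main : ∀ u v : L, kF u v = algebraMap R L f → kG u v = algebraMap R L g →
      kH u v = algebraMap R L h → ∃ r : R, algebraMap R L r = u := by
    intro u v ef eg eh
    apply induct D hD i0 t rfl ht0 (N + 1) u (fun j => affu j u v ef eg eh)
    intro j
    have h1 := infu j (S ^ N * u) (S ^ N * v)
      (by rw [← ef]; unfold kF; ring) (by rw [← eg]; unfold kG; ring) (by rw [← eh]; unfold kH; ring)
    have h2 : t * t⁻¹ ^ (N + 1) * u = S ^ (59 * N) * (S ^ N * u) := by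
      rw [pow_succ, ← mul_assoc, mul_comm t, mul_assoc (t⁻¹ ^ N), mul_inv_cancel₀ ht0, ← hS']
      ring
    rw [h2]
    exact mul_mem (pow_mem (sS j) _) h1
  obtain ⟨u', rfl⟩ := main u v ef eg eh
  obtain ⟨v', rfl⟩ := main v (-algebraMap R L u') (by rw [kF_symm, ef]) (by rw [kG_symm, eg]) (by rw [kH_symm, eh])
  refine ⟨u', v', inj ?_⟩
  rw [← ef]
  simp only [kF, map_mul, map_add, map_sub, map_pow, map_ofNat]
end fin2
end Iit

namespace Iit
open MvPolynomial
set_option linter.unusedSectionVars false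

section elem
variable {k : Type*} [Field k] [CharZero k] {σ : Type*}

/-- constants -/
noncomputable abbrev K0 (k σ : Type*) [Field k] : Subalgebra k (MvPolynomial σ k) := ⊥

lemma K0_iff {p : MvPolynomial σ k} : p ∈ K0 k σ ↔ ∃ c, p = C c := by
  rw [Algebra.mem_bot]
  constructor
  · rintro ⟨c, rfl⟩; exact ⟨c, rfl⟩
  · rintro ⟨c, rfl⟩; exact ⟨c, rfl⟩

lemma K0_deg {p : MvPolynomial σ k} (h : p.totalDegree = 0) : p ∈ K0 k σ :=
  K0_iff.mpr ⟨_, totalDegree_eq_zero_iff_eq_C.mp h⟩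

lemma K0_C (c : k) : (C c : MvPolynomial σ k) ∈ K0 k σ := K0_iff.mpr ⟨c, rfl⟩

lemma K0_unit {p : MvPolynomial σ k} (h : IsUnit p) : p ∈ K0 k σ := by
  obtain ⟨q, hq⟩ := h.exists_right_inv
  have h0 : p * q ≠ 0 := by rw [hq]; exact one_ne_zero
  have := congrArg totalDegree hq
  rw [totalDegree_mul_of_isDomain (left_ne_zero_of_mul h0) (right_ne_zero_of_mul h0),
    totalDegree_one] at this
  exact K0_deg (by omega)

lemma irr_not_K0 {p : MvPolynomial σ k} (h : Irreducible p) : p ∉ K0 k σ := by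
  intro hp
  obtain ⟨c, rfl⟩ := K0_iff.mp hp
  by_cases hc : c = 0
  · subst hc; simp at h
  · exact h.not_isUnit ((isUnit_iff_ne_zero.mpr hc).map C)

lemma irr_deg {p : MvPolynomial σ k} (h : Irreducible p) : 1 ≤ p.totalDegree := by
  by_contra hd
  exact irr_not_K0 h (K0_deg (by omega))

lemma K0_root {p : MvPolynomial σ k} {n : ℕ} (hn : n ≠ 0) (h : p ^ n ∈ K0 k σ) : p ∈ K0 k σ := by
  by_cases hp : p = 0
  · rw [hp]; exact zero_mem _
  obtain ⟨c, hc⟩ := K0_iff.mp h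
  have := congrArg totalDegree hc
  rw [deg_pow _ hp, totalDegree_C] at this
  exact K0_deg (by simpa [hn] using this)

lemma K0_cmul {p : MvPolynomial σ k} {c : k} (hc : c ≠ 0) (h : C c * p ∈ K0 k σ) : p ∈ K0 k σ := by
  have := mul_mem (K0_C (σ := σ) c⁻¹) h
  rwa [← mul_assoc, ← C_mul, inv_mul_cancel₀ hc, C_1, one_mul] at this

lemma unit_of_dvd {h q : MvPolynomial σ k} {n : ℕ} (hh : Irreducible h) (hq : q ∣ h ^ n)
    (hn : ¬ h ∣ q) : IsUnit q := by
  have h1 : IsRelPrime h q := hh.isRelPrime_iff_not_dvd.mpr hn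
  exact (IsRelPrime.pow_left (m := n) h1).symm dvd_rfl hq

lemma not_dvd {f h : MvPolynomial σ k} (hf : Irreducible f) (r : IsRelPrime f h) : ¬ f ∣ h :=
  hf.isRelPrime_iff_not_dvd.mp r

lemma dvd_C_mul {f h : MvPolynomial σ k} {c : k} (hc : c ≠ 0) (hd : f ∣ C c * h) : f ∣ h := by
  have := hd.mul_left (C c⁻¹)
  rwa [← mul_assoc, ← C_mul, inv_mul_cancel₀ hc, C_1, one_mul] at this

lemma no_poly [IsAlgClosed k] {f h : MvPolynomial σ k} (hh : Irreducible h) (hf : Irreducible f)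
    (a : ℕ) (ha : 2 ≤ a) (s r : k) (hr : r ≠ 0) (e : h = C s + C r * f ^ a) : False := by
  obtain ⟨w, hw⟩ := IsAlgClosed.exists_pow_nat_eq (-s / r) (show 0 < a by omega)
  have hd : f - C w ∣ f ^ a - C w ^ a := sub_dvd_pow_sub_pow _ _ _
  obtain ⟨q, hq⟩ := hd
  have e1 : h = (f - C w) * (C r * q) := by
    have : C s = - (C r * C w ^ a : MvPolynomial σ k) := by
      rw [← C_pow, hw, ← C_mul, ← C_neg]; congr 1; field_simp
    rw [e, this]
    linear_combination C r * hq
  rcases hh.isUnit_or_isUnit e1 with h1 | h1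
  · have := add_mem (K0_unit h1) (K0_C (σ := σ) w)
    rw [sub_add_cancel] at this
    exact irr_not_K0 hf this
  · have h2 := K0_unit h1
    obtain ⟨m, rfl⟩ : ∃ m, a = m + 1 := ⟨a - 1, by omega⟩
    have h3 : f * (C r * f ^ m - C r * q) ∈ K0 k σ := by
      have h4 : f * (C r * f ^ m - C r * q) = - C s - C w * (C r * q) := by
        linear_combination e1 - e
      rw [h4]
      exact sub_mem (neg_mem (K0_C s)) (mul_mem (K0_C w) h2)
    obtain ⟨c, hc⟩ := K0_iff.mp h3
    by_cases hc0 : c = 0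
    · rw [hc0, C_0] at hc
      have h5 := (mul_eq_zero.mp hc).resolve_left hf.ne_zero
      rw [sub_eq_zero] at h5
      rw [← h5] at h2
      exact irr_not_K0 hf (K0_root (by omega) (K0_cmul hr h2))
    · exact hf.not_isUnit (isUnit_of_dvd_unit ⟨_, hc.symm⟩ ((isUnit_iff_ne_zero.mpr hc0).map C))

lemma case22 [IsAlgClosed k] {f g h : MvPolynomial σ k} (hf : Irreducible f) (hh : Irreducible h)
    (hfh : IsRelPrime f h) (a : ℕ) (ha : 2 ≤ a) (e : f ^ a + g ^ 2 + h ^ 2 = 0) : False := by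
  obtain ⟨i, hi⟩ := IsAlgClosed.exists_pow_nat_eq (-1 : k) (show 0 < 2 by norm_num)
  have key : ∀ i : k, i ^ 2 = -1 → ¬ IsUnit (h + C i * g) := by
    intro i hi hu
    have hi' : (C i : MvPolynomial σ k) ^ 2 = -1 := by rw [← C_pow, hi]; simp
    obtain ⟨c, hc⟩ := K0_iff.mp (K0_unit hu)
    have hc0 : c ≠ 0 := by rintro rfl; rw [hc] at hu; simp at hu
    apply no_poly hh hf a ha (c / 2) (- 1 / (2 * c)) (by simp [hc0])
    have e2 : C (2 * c) * h = C (2 * c) * (C (c / 2) + C (-1 / (2 * c)) * f ^ a) := by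
      have e3 : (C (2 * c) * (C (c / 2) + C (-1 / (2 * c)) * f ^ a) : MvPolynomial σ k)
        = C c * C c - f ^ a := by
        rw [mul_add, ← mul_assoc, ← C_mul, ← C_mul, ← C_mul]
        have x1 : 2 * c * (c / 2) = c * c := by ring
        have x2 : 2 * c * (-1 / (2 * c)) = -1 := by field_simp
        rw [x1, x2, C_neg, C_1]; ring
      rw [e3, C_mul, ← hc, map_ofNat]
      linear_combination e - g ^ 2 * hi'
    have : (C (2 * c) : MvPolynomial σ k) ≠ 0 := by simp [hc0]
    exact mul_left_cancel₀ this e2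
  have hi' : (C i : MvPolynomial σ k) ^ 2 = -1 := by rw [← C_pow, hi]; simp
  have n1 := key i hi
  have n2 := key (-i) (by rw [neg_sq, hi])
  have p : (h + C i * g) * (h + C (-i) * g) = - f ^ a := by
    rw [C_neg]; linear_combination e - g ^ 2 * hi'
  have d1 : f ∣ h + C i * g := by
    by_contra hd
    refine n1 (unit_of_dvd (n := a) hf ?_ hd)
    rw [← dvd_neg, ← p]; exact dvd_mul_right _ _
  have d2 : f ∣ h + C (-i) * g := by
    by_contra hd
    refine n2 (unit_of_dvd (n := a) hf ?_ hd)
    rw [← dvd_neg, ← p]; exact dvd_mul_left _ _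
  have d3 := dvd_add d1 d2
  apply not_dvd hf hfh
  apply dvd_C_mul (c := (2 : k)) two_ne_zero
  rw [map_ofNat]
  convert d3 using 1
  rw [C_neg]; ring

lemma case432 [IsAlgClosed k] {f g h : MvPolynomial σ k} (hf : Irreducible f) (hg : Irreducible g)
    (hh : Irreducible h) (hgh : IsRelPrime g h) (e : f ^ 4 + g ^ 3 + h ^ 2 = 0) : False := by
  obtain ⟨i, hi⟩ := IsAlgClosed.exists_pow_nat_eq (-1 : k) (show 0 < 2 by norm_num)
  have key : ∀ i : k, i ^ 2 = -1 → ¬ IsUnit (h + C i * f ^ 2) := by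
    intro i hi hu
    obtain ⟨c, hc⟩ := K0_iff.mp (K0_unit hu)
    have hi0 : i ≠ 0 := by rintro rfl; simp at hi
    apply no_poly hh hf 2 le_rfl c (-i) (by simpa using hi0)
    rw [C_neg]; linear_combination hc
  have hi' : (C i : MvPolynomial σ k) ^ 2 = -1 := by rw [← C_pow, hi]; simp
  have n1 := key i hi
  have n2 := key (-i) (by rw [neg_sq, hi])
  have p : (h + C i * f ^ 2) * (h + C (-i) * f ^ 2) = - g ^ 3 := by
    rw [C_neg]; linear_combination e - f ^ 4 * hi'
  have d1 : g ∣ h + C i * f ^ 2 := by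
    by_contra hd
    refine n1 (unit_of_dvd (n := 3) hg ?_ hd)
    rw [← dvd_neg, ← p]; exact dvd_mul_right _ _
  have d2 : g ∣ h + C (-i) * f ^ 2 := by
    by_contra hd
    refine n2 (unit_of_dvd (n := 3) hg ?_ hd)
    rw [← dvd_neg, ← p]; exact dvd_mul_left _ _
  have d3 := dvd_add d1 d2
  apply not_dvd hg hgh
  apply dvd_C_mul (c := (2 : k)) two_ne_zero
  rw [map_ofNat]
  convert d3 using 1
  rw [C_neg]; ring

lemma case332 [IsAlgClosed k] {f g h : MvPolynomial σ k} (hf : Irreducible f)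
    (hh : Irreducible h) (hfh : IsRelPrime f h) (e : f ^ 3 + g ^ 3 + h ^ 2 = 0) : False := by
  obtain ⟨s, hs⟩ := IsAlgClosed.exists_pow_nat_eq (-3 : k) (show 0 < 2 by norm_num)
  have hs0 : s ≠ 0 := by rintro rfl; norm_num at hs
  obtain ⟨w, w', h1, h2, h3⟩ : ∃ w w' : k, w + w' = -1 ∧ w * w' = 1 ∧ w - w' = s :=
    ⟨(-1 + s) / 2, (-1 - s) / 2, by ring, by linear_combination - hs / 4, by ring⟩
  have s1 : 1 - w ≠ 0 := by
    intro h0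
    have : (3 : k) = 0 := by
      have hw : w = 1 := by linear_combination - h0
      rw [hw] at h1 h2
      linear_combination h1 - h2
    norm_num at this
  have s2 : 1 - w' ≠ 0 := by
    intro h0
    have : (3 : k) = 0 := by
      have hw : w' = 1 := by linear_combination - h0
      rw [hw] at h1 h2
      linear_combination h1 - h2
    norm_num at this
  have h1' : (C w + C w' : MvPolynomial σ k) = -1 := by rw [← C_add, h1]; simp
  have h2' : (C w * C w' : MvPolynomial σ k) = 1 := by rw [← C_mul, h2]; simp
  have p : (g + C 1 * f) * (g + C w * f) * (g + C w' * f) = - h ^ 2 := by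
    rw [C_1]
    linear_combination e + (g ^ 2 * f + g * f ^ 2) * h1' + (g * f ^ 2 + f ^ 3) * h2'
  have key : ∀ x y : k, x - y ≠ 0 → g + C x * f ∣ h ^ 2 → g + C y * f ∣ h ^ 2 →
      h ∣ g + C x * f ∨ h ∣ g + C y * f := by
    intro x y hxy d1 d2
    by_contra! hn
    have u1 := K0_unit (unit_of_dvd hh d1 hn.1)
    have u2 := K0_unit (unit_of_dvd hh d2 hn.2)
    have := sub_mem u1 u2
    apply irr_not_K0 hf
    apply K0_cmul hxy
    convert this using 1
    rw [C_sub]; ring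
  have key2 : ∀ x y : k, x - y ≠ 0 → h ∣ g + C x * f → h ∣ g + C y * f → False := by
    intro x y hxy d1 d2
    apply not_dvd hh hfh.symm
    apply dvd_C_mul hxy
    convert dvd_sub d1 d2 using 1
    rw [C_sub]; ring
  have a1 : g + C 1 * f ∣ h ^ 2 := by
    rw [← dvd_neg, ← p, mul_assoc]; exact dvd_mul_right _ _
  have a2 : g + C w * f ∣ h ^ 2 := by
    rw [← dvd_neg, ← p]; exact (dvd_mul_left _ _).mul_right _
  have a3 : g + C w' * f ∣ h ^ 2 := by
    rw [← dvd_neg, ← p]; exact dvd_mul_left _ _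
  have s3 : w - w' ≠ 0 := by rwa [h3]
  have b1 := key _ _ s1 a1 a2
  have b2 := key _ _ s2 a1 a3
  have b3 := key _ _ s3 a2 a3
  have c1 := key2 _ _ s1
  have c2 := key2 _ _ s2
  have c3 := key2 _ _ s3
  rcases b1 with b1 | b1
  · rcases b3 with b3 | b3
    · exact c1 b1 b3
    · exact c2 b1 b3
  · rcases b2 with b2 | b2
    · exact c1 b2 b1
    · exact c3 b1 b2

lemma term_deg {g h : MvPolynomial σ k} (hg : 1 ≤ g.totalDegree) (i : σ) (b : ℕ) :
    ((b : MvPolynomial σ k) * (h * pderiv i g)).totalDegree + 1 ≤ g.totalDegree + h.totalDegree := by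
  by_cases h0 : pderiv i g = 0
  · rw [h0]; simp; omega
  · have h1 := deg_pderiv g i h0
    have h2 := totalDegree_mul (b : MvPolynomial σ k) (h * pderiv i g)
    have h3 := totalDegree_mul h (pderiv i g)
    have h4 : (b : MvPolynomial σ k).totalDegree = 0 := by
      rw [← map_natCast C, totalDegree_C]
    omega

lemma mason {f g h : MvPolynomial σ k} (hf : Irreducible f) (hg : Irreducible g) (hh : Irreducible h)
    (hfg : IsRelPrime f g) (hgh : IsRelPrime g h) (a b c : ℕ) (ha : 1 ≤ a) (hb : 1 ≤ b)
    (hc : 1 ≤ c) (e : f ^ a + g ^ b + h ^ c = 0) :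
    a * f.totalDegree + 1 ≤ f.totalDegree + g.totalDegree + h.totalDegree := by
  obtain ⟨i, hi⟩ : ∃ i, (b : MvPolynomial σ k) * (h * pderiv i g) - c * (g * pderiv i h) ≠ 0 := by
    by_contra! hW
    apply irr_not_K0 hg
    rw [K0_iff]
    apply eq_C_of_pderiv
    intro i
    by_contra hne
    have h1 : g ∣ C (b : k) * (h * pderiv i g) := by
      rw [map_natCast]
      exact ⟨c * pderiv i h, by linear_combination hW i⟩
    have h2 := hgh.dvd_of_dvd_mul_left (dvd_C_mul (by exact_mod_cast (by omega : b ≠ 0)) h1)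
    obtain ⟨q, hq⟩ := h2
    have h3 := deg_pderiv g i hne
    have hq0 : q ≠ 0 := by rintro rfl; exact hne (by rw [hq, mul_zero])
    rw [hq, totalDegree_mul_of_isDomain hg.ne_zero hq0] at h3
    omega
  obtain ⟨a, rfl⟩ : ∃ m, a = m + 1 := ⟨a - 1, by omega⟩
  obtain ⟨b, rfl⟩ : ∃ m, b = m + 1 := ⟨b - 1, by omega⟩
  obtain ⟨c, rfl⟩ : ∃ m, c = m + 1 := ⟨c - 1, by omega⟩
  have hd : f ^ a ∣ ((b + 1 : ℕ) : MvPolynomial σ k) * (h * pderiv i g) - (c + 1 : ℕ) * (g * pderiv i h) := by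
    have hr : IsRelPrime (f ^ a) (g ^ b) := IsRelPrime.pow hfg
    apply hr.dvd_of_dvd_mul_left
    have := congrArg (pderiv i) e
    simp only [map_add, Derivation.leibniz_pow, map_zero, Nat.add_sub_cancel, smul_eq_mul,
      nsmul_eq_mul] at this
    refine ⟨- (((a + 1 : ℕ) : MvPolynomial σ k) * (h * pderiv i f) - (c + 1 : ℕ) * (f * pderiv i h)), ?_⟩
    linear_combination h * this - ((c + 1 : ℕ) : MvPolynomial σ k) * pderiv i h * e
  obtain ⟨q, hq⟩ := hd
  have hq0 : q ≠ 0 := by rintro rfl; exact hi (by rw [hq, mul_zero])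
  have h1 := congrArg totalDegree hq
  rw [totalDegree_mul_of_isDomain (pow_ne_zero _ hf.ne_zero) hq0, deg_pow _ hf.ne_zero] at h1
  have h2 := totalDegree_sub (((b + 1 : ℕ) : MvPolynomial σ k) * (h * pderiv i g))
    ((c + 1 : ℕ) * (g * pderiv i h))
  have h3 := term_deg (h := h) (irr_deg hg) i (b + 1)
  have h4 := term_deg (h := g) (irr_deg hh) i (c + 1)
  have h5 : (a + 1) * f.totalDegree = a * f.totalDegree + f.totalDegree := by ring
  omega

lemma case532 [IsAlgClosed k] (i0 : σ) {f g h : MvPolynomial σ k} (hf : Irreducible f)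
    (hg : Irreducible g) (hh : Irreducible h) (hgh : IsRelPrime g h)
    (e : f ^ 5 + g ^ 3 + h ^ 2 = 0) : False := by
  obtain ⟨μ, hμ⟩ := IsAlgClosed.exists_pow_nat_eq (-1 / 1728 : k) (show 0 < 5 by norm_num)
  have hμ0 : μ ≠ 0 := by rintro rfl; norm_num at hμ
  have hf1 : Irreducible (C μ * f) :=
    (irreducible_isUnit_mul ((isUnit_iff_ne_zero.mpr hμ0).map C)).mpr hf
  have hμ' : (1728 : MvPolynomial σ k) * C μ ^ 5 = -1 := by
    rw [← C_pow, hμ, ← map_ofNat C 1728, ← C_mul]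
    rw [show (1728 : k) * (-1 / 1728) = -1 by norm_num]; simp
  obtain ⟨u, v, huv⟩ := klein_poly i0 (C μ * f) g h hf1.ne_zero hg.ne_zero hh.ne_zero hgh
    (by linear_combination e - f ^ 5 * hμ')
  obtain ⟨s, hs⟩ := IsAlgClosed.exists_pow_nat_eq (125 : k) (show 0 < 2 by norm_num)
  let α : k := (-11 + s) / 2
  let β : k := (-11 - s) / 2
  have h1 : α + β = -11 := by simp only [α, β]; ring
  have h2 : α * β = -1 := by simp only [α, β]; linear_combination - hs / 4
  have hα : α ≠ 0 := by intro h0; rw [h0] at h2; norm_num at h2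
  have h1' : (C α + C β : MvPolynomial σ k) = -11 := by
    rw [← C_add, h1, C_neg, map_ofNat]
  have h2' : (C α * C β : MvPolynomial σ k) = -1 := by rw [← C_mul, h2]; simp
  have fac : C μ * f = u * (v * ((u ^ 5 - C α * v ^ 5) * (u ^ 5 - C β * v ^ 5))) := by
    rw [← huv]
    linear_combination u * v * (u ^ 5 * v ^ 5 * h1' - v ^ 10 * h2')
  have fin : u ∈ K0 k σ → v ∈ K0 k σ → False := by
    intro hu hv
    apply irr_not_K0 hf1
    rw [fac]
    exact mul_mem hu (mul_mem hv (mul_mem (sub_mem (pow_mem hu _) (mul_mem (K0_C _) (pow_mem hv _)))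
      (sub_mem (pow_mem hu _) (mul_mem (K0_C _) (pow_mem hv _)))))
  rcases hf1.isUnit_or_isUnit fac with hu | hu
  · have hu' := K0_unit hu
    have hi : Irreducible (v * ((u ^ 5 - C α * v ^ 5) * (u ^ 5 - C β * v ^ 5))) := by
      rw [fac] at hf1
      exact (irreducible_isUnit_mul hu).mp hf1
    rcases hi.isUnit_or_isUnit rfl with hv | hv
    · exact fin hu' (K0_unit hv)
    · have hA := K0_unit (isUnit_of_mul_isUnit_left hv)
      apply fin hu'
      apply K0_root (n := 5) (by norm_num)
      apply K0_cmul hα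
      have := sub_mem (pow_mem hu' 5) hA
      rwa [sub_sub_cancel] at this
  · have hv := K0_unit (isUnit_of_mul_isUnit_left hu)
    have hA := K0_unit (isUnit_of_mul_isUnit_left (isUnit_of_mul_isUnit_right hu))
    refine fin ?_ hv
    apply K0_root (n := 5) (by norm_num)
    have := add_mem hA (mul_mem (K0_C (σ := σ) α) (pow_mem hv 5))
    rwa [sub_add_cancel] at this

theorem main [IsAlgClosed k] (i0 : σ) (f g h : MvPolynomial σ k)
    (hf : Irreducible f) (hg : Irreducible g) (hh : Irreducible h)
    (hfg : IsRelPrime f g) (hfh : IsRelPrime f h) (hgh : IsRelPrime g h)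
    (a b c : ℕ) (hba : b ≤ a) (hcb : c ≤ b) (hc : 1 ≤ c)
    (heq : f ^ a + g ^ b + h ^ c = 0) : c = 1 := by
  by_contra hc1
  have m1 := mason hf hg hh hfg hgh a b c (by omega) (by omega) (by omega) heq
  have m2 := mason hg hf hh hfg.symm hfh b a c (by omega) (by omega) (by omega)
    (by linear_combination heq)
  have m3 := mason hh hf hg hfh.symm hfg c a b (by omega) (by omega) (by omega)
    (by linear_combination heq)
  have red : ∀ x y z, x ≤ a → y ≤ b → z ≤ c →
      x * f.totalDegree + 1 ≤ f.totalDegree + g.totalDegree + h.totalDegree ∧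
      y * g.totalDegree + 1 ≤ f.totalDegree + g.totalDegree + h.totalDegree ∧
      z * h.totalDegree + 1 ≤ f.totalDegree + g.totalDegree + h.totalDegree := by
    intro x y z hx hy hz
    have := Nat.mul_le_mul_right f.totalDegree hx
    have := Nat.mul_le_mul_right g.totalDegree hy
    have := Nat.mul_le_mul_right h.totalDegree hz
    omega
  by_cases c3 : 3 ≤ c
  · have := red 3 3 3 (by omega) (by omega) c3
    omega
  obtain rfl : c = 2 := by omega
  by_cases b4 : 4 ≤ b
  · have := red 4 4 2 (by omega) b4 le_rfl
    omega
  by_cases b2 : b = 2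
  · subst b2
    exact case22 hf hh hfh a hba heq
  obtain rfl : b = 3 := by omega
  by_cases a6 : 6 ≤ a
  · have := red 6 3 2 a6 le_rfl le_rfl
    omega
  interval_cases a
  · exact case332 hf hh hfh heq
  · exact case432 hf hg hh hgh heq
  · exact case532 i0 hf hg hh hgh heq
end elem
end Iit

open MvPolynomial in
/-- Iitaka: Let `k` be algebraically closed of characteristic zero and `n ≥ 1`.
If `f, g, h ∈ k[x_1, …, x_n]` are irreducible and pairwise relatively prime with
`f^a + g^b + h^c = 0` for integers `a ≥ b ≥ c ≥ 1`, then `c = 1`. -/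
theorem iitaka_abc (k : Type*) [Field k] [IsAlgClosed k] [CharZero k]
    (n : ℕ) (hn : 1 ≤ n)
    (f g h : MvPolynomial (Fin n) k)
    (hf : Irreducible f) (hg : Irreducible g) (hh : Irreducible h)
    (hfg : IsRelPrime f g) (hfh : IsRelPrime f h) (hgh : IsRelPrime g h)
    (a b c : ℕ) (hba : b ≤ a) (hcb : c ≤ b) (hc : 1 ≤ c)
    (heq : f ^ a + g ^ b + h ^ c = 0) : c = 1 := by
  exact Iit.main ⟨0, hn⟩ f g h hf hg hh hfg hfh hgh a b c hba hcb hc heq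
end

section
/- Let k be an algebraically closed field of characteristic zero and let B = k[x,y,z]/(x^5 + y^3 + z^2). Then B is rigid: the only locally nilpotent k-derivation of B is the zero derivation. -/
set_option synthInstance.maxHeartbeats 400000

open MvPolynomial in
/-- The ring `k[x, y, z]/(x⁵ + y³ + z²)`. -/
noncomputable abbrev PoincareSurfaceRing (k : Type*) [Field k] : Type _ :=
  MvPolynomial (Fin 3) k ⧸
    (Ideal.span {(X 0 : MvPolynomial (Fin 3) k) ^ 5 + X 1 ^ 3 + X 2 ^ 2} :
      Ideal (MvPolynomial (Fin 3) k))


set_option linter.unusedSectionVars false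

namespace Rig

section LND
variable {k B : Type*} [Field k] [CharZero k] [CommRing B] [IsDomain B] [Algebra k B]

def Deg (D : Derivation k B B) (b : B) (n : ℕ) : Prop :=
  (⇑D)^[n] b ≠ 0 ∧ (⇑D)^[n+1] b = 0

lemma iter_zero (D : Derivation k B B) (n : ℕ) : (⇑D)^[n] 0 = 0 := by
  induction n with
  | zero => rfl
  | succ n ih => rw [Function.iterate_succ_apply, map_zero, ih]

lemma iter_add (D : Derivation k B B) (n : ℕ) (a b : B) :
    (⇑D)^[n] (a + b) = (⇑D)^[n] a + (⇑D)^[n] b := by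
  induction n generalizing a b with
  | zero => rfl
  | succ n ih => simp only [Function.iterate_succ_apply, map_add, ih]

lemma iter_smul (D : Derivation k B B) (n : ℕ) (r : k) (b : B) :
    (⇑D)^[n] (r • b) = r • (⇑D)^[n] b := by
  induction n generalizing b with
  | zero => rfl
  | succ n ih => simp only [Function.iterate_succ_apply, D.map_smul, ih]

lemma iter_eq_zero_of_le (D : Derivation k B B) {n m : ℕ} (h : n ≤ m) {b : B}
    (hb : (⇑D)^[n] b = 0) : (⇑D)^[m] b = 0 := by
  obtain ⟨r, rfl⟩ := Nat.exists_eq_add_of_le h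
  rw [add_comm, Function.iterate_add_apply, hb, iter_zero]

lemma Deg.unique {D : Derivation k B B} {b : B} {n m : ℕ} (h : Deg D b n) (h' : Deg D b m) :
    n = m := by
  rcases lt_trichotomy n m with h1 | h1 | h1
  · exact absurd (iter_eq_zero_of_le D h1 h.2) h'.1
  · exact h1
  · exact absurd (iter_eq_zero_of_le D h1 h'.2) h.1

lemma exists_deg {D : Derivation k B B} {b : B} {N : ℕ} (h : (⇑D)^[N] b = 0) (hb : b ≠ 0) :
    ∃ n, Deg D b n := by
  classical
  have hex : ∃ n, (⇑D)^[n] b = 0 := ⟨N, h⟩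
  have h0 : Nat.find hex ≠ 0 := by
    intro h0
    have := Nat.find_spec hex
    rw [h0] at this
    exact hb this
  obtain ⟨n, hn⟩ := Nat.exists_eq_succ_of_ne_zero h0
  refine ⟨n, Nat.find_min hex (by omega), ?_⟩
  have := Nat.find_spec hex
  rwa [hn] at this

lemma leib (D : Derivation k B B) (s : ℕ) : ∀ (p q : ℕ) (a b : B), p + q = s →
    (⇑D)^[p+1] a = 0 → (⇑D)^[q+1] b = 0 →
    (⇑D)^[s] (a * b) = ((p+q).choose p : B) * ((⇑D)^[p] a * (⇑D)^[q] b) ∧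
    (⇑D)^[s+1] (a * b) = 0 := by
  induction s with
  | zero =>
    intro p q a b h ha hb
    obtain ⟨rfl, rfl⟩ : p = 0 ∧ q = 0 := by omega
    simp at ha hb
    simp [ha, hb]
  | succ s ih =>
    intro p q a b h ha hb
    have key : (⇑D)^[s+1] (a * b) = ((p+q).choose p : B) * ((⇑D)^[p] a * (⇑D)^[q] b) := by
      rw [Function.iterate_succ_apply, D.leibniz, iter_add]
      simp only [smul_eq_mul]
      rcases p with _ | p
      · rcases q with _ | q
        · omega
        · have ha' : D a = 0 := by simpa using ha
          have := (ih 0 q a (D b) (by omega) ha (by simpa using hb)).1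
          rw [this, ha', mul_zero, iter_zero]
          simp
      · rcases q with _ | q
        · have hb' : D b = 0 := by simpa using hb
          have := (ih p 0 (D a) b (by omega) (by simpa using ha) hb).1
          rw [hb', mul_zero, iter_zero, mul_comm b, this]
          simp
        · have e1 := (ih (p+1) q a (D b) (by omega) ha (by simpa using hb)).1
          have e2 := (ih p (q+1) (D a) b (by omega) (by simpa using ha) hb).1
          rw [e1, mul_comm b, e2, show p + 1 + (q + 1) = (p + (q+1)) + 1 by ring,
            Nat.choose_succ_succ, show p + 1 + q = p + (q+1) by ring]
          simp only [Function.iterate_succ_apply]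
          push_cast
          ring
    refine ⟨key, ?_⟩
    rw [Function.iterate_succ_apply', key, ← nsmul_eq_mul, map_nsmul, D.leibniz]
    rw [← Function.iterate_succ_apply' D, ← Function.iterate_succ_apply' D]
    simp only [Nat.succ_eq_add_one, ha, hb]; simp

lemma Deg.mul {D : Derivation k B B} {a b : B} {n m : ℕ} (h : Deg D a n) (h' : Deg D b m) :
    Deg D (a * b) (n + m) := by
  have : CharZero B := charZero_of_injective_algebraMap (algebraMap k B).injective
  obtain ⟨h1, h2⟩ := leib D (n+m) n m a b rfl h.2 h'.2
  refine ⟨?_, h2⟩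
  rw [h1]
  refine mul_ne_zero ?_ (mul_ne_zero h.1 h'.1)
  exact_mod_cast (Nat.choose_pos (by omega)).ne'

lemma Deg.zero {D : Derivation k B B} {a : B} (h : D a = 0) (ha : a ≠ 0) : Deg D a 0 := ⟨ha, h⟩

def LN (D : Derivation k B B) : Prop := ∀ b, ∃ n, (⇑D)^[n] b = 0

lemma LN.deg {D : Derivation k B B} (hD : LN D) {b : B} (hb : b ≠ 0) : ∃ n, Deg D b n :=
  exists_deg (hD b).choose_spec hb

lemma LN.fc {D : Derivation k B B} (hD : LN D) {a b : B} (h : D (a * b) = 0) (hab : a * b ≠ 0) :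
    D a = 0 := by
  obtain ⟨n, hn⟩ := hD.deg (left_ne_zero_of_mul hab)
  obtain ⟨m, hm⟩ := hD.deg (right_ne_zero_of_mul hab)
  have := (hn.mul hm).unique (Deg.zero h hab)
  obtain rfl : n = 0 := by omega
  simpa using hn.2

lemma LN.fc' {D : Derivation k B B} (hD : LN D) {a b : B} (h : D (a * b) = 0) (hab : a * b ≠ 0) :
    D b = 0 := by
  rw [mul_comm] at h hab
  exact hD.fc h hab

lemma LN.pow {D : Derivation k B B} (hD : LN D) {a : B} {n : ℕ} (h : D (a ^ (n+1)) = 0) :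
    D a = 0 := by
  by_cases ha : a = 0
  · simp [ha]
  · rw [pow_succ] at h
    exact hD.fc' h (mul_ne_zero (pow_ne_zero _ ha) ha)

lemma LN.lt {D : Derivation k B B} (hD : LN D) {a b s t : B} {p q n m : ℕ} (hs : D s = 0)
    (ht : D t = 0) (h : D (s * a ^ (p+2) + t * b ^ (q+2)) = 0)
    (h0 : s * a ^ (p+2) + t * b ^ (q+2) ≠ 0) (hn : Deg D a n) (hm : Deg D b (m+1)) :
    n ≤ m := by
  have : CharZero B := charZero_of_injective_algebraMap (algebraMap k B).injective
  have hDb : Deg D (D b) m := hm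
  have h2 : Deg D (((q+2 : ℕ) : B)) 0 := Deg.zero (D.map_natCast _) (Nat.cast_ne_zero.2 (by omega))
  have e := (Deg.zero h h0).mul (h2.mul hDb)
  have e0 : (s * a ^ (p+2) + t * b ^ (q+2)) * (((q+2 : ℕ) : B) * D b) =
      a * (a ^ p * s * ((q+2 : ℕ) * a * D b - (p+2 : ℕ) * b * D a)) := by
    simp only [map_add, D.leibniz, D.leibniz_pow, hs, ht, smul_eq_mul, nsmul_eq_mul] at h
    have h' : b * (s * ((p+2 : ℕ) * (a ^ (p+1) * D a)) + t * ((q+2 : ℕ) * (b ^ (q+1) * D b))) = 0 := by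
      have := congrArg (b * ·) h
      simpa using this
    linear_combination h'
  rw [e0] at e
  have hw : a ^ p * s * ((q+2 : ℕ) * a * D b - (p+2 : ℕ) * b * D a) ≠ 0 := by
    intro hw
    rw [hw, mul_zero] at e
    exact e.1 (iter_zero _ _)
  obtain ⟨r, hr⟩ := hD.deg hw
  have := (hn.mul hr).unique e
  omega

lemma LN.key {D : Derivation k B B} (hD : LN D) {a b s t : B} {p q : ℕ} (hs : D s = 0)
    (ht : D t = 0) (hs0 : s ≠ 0) (ht0 : t ≠ 0) (h : D (s * a ^ (p+2) + t * b ^ (q+2)) = 0)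
    (h0 : s * a ^ (p+2) + t * b ^ (q+2) ≠ 0) : D a = 0 ∧ D b = 0 := by
  by_cases ha : D a = 0
  · refine ⟨ha, hD.pow (n := q+1) ?_⟩
    simpa [hs, ha, ht, ht0, D.leibniz, D.leibniz_pow, add_assoc, one_add_one_eq_two] using h
  by_cases hb : D b = 0
  · refine ⟨hD.pow (n := p+1) ?_, hb⟩
    simpa [hs, hb, ht, hs0, D.leibniz, D.leibniz_pow, add_assoc, one_add_one_eq_two] using h
  exfalso
  obtain ⟨n, hn⟩ := hD.deg ha
  obtain ⟨m, hm⟩ := hD.deg hb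
  have hn' : Deg D a (n+1) := hn
  have hm' : Deg D b (m+1) := hm
  have h1 := hD.lt hs ht h h0 hn' hm'
  rw [add_comm] at h h0
  have h2 := hD.lt ht hs h h0 hm' hn'
  omega

end LND

section Grad
variable {k B : Type*} [Field k] [CharZero k] [CommRing B] [IsDomain B] [Algebra k B]

structure Gr (c : B →ₗ[k] (ℤ →₀ B)) : Prop where
  sum : ∀ b, (c b).sum (fun _ v => v) = b
  proj : ∀ b j, c (c b j) = Finsupp.single j (c b j)
  mul : ∀ a b i, c a = Finsupp.single i a → ∀ l, c (a * b) l = a * c b (l - i)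

variable {c : B →ₗ[k] (ℤ →₀ B)}

lemma Gr.induct (hc : Gr c) {P : B → Prop} (h0 : P 0) (ha : ∀ a b, P a → P b → P (a + b))
    (hh : ∀ i a, c a = Finsupp.single i a → P a) (b : B) : P b := by
  rw [← hc.sum b, Finsupp.sum]
  exact Finset.sum_induction _ P ha h0 (fun i _ => hh i _ (hc.proj b i))

lemma Gr.homMul (hc : Gr c) {a b : B} {i j : ℤ} (ha : c a = Finsupp.single i a)
    (hb : c b = Finsupp.single j b) : c (a * b) = Finsupp.single (i + j) (a * b) := by
  ext l
  rw [hc.mul a b i ha, hb]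
  by_cases h : l = i + j
  · subst h; simp
  · rw [Finsupp.single_eq_of_ne (by omega), Finsupp.single_eq_of_ne h, mul_zero]

noncomputable def Dm (c : B →ₗ[k] (ℤ →₀ B)) (D : Derivation k B B) (m : ℤ) : B →ₗ[k] B :=
  Finsupp.lsum k (fun i : ℤ => (Finsupp.lapply (i + m)) ∘ₗ c ∘ₗ D.toLinearMap) ∘ₗ c

lemma Dm_hom (D : Derivation k B B) (m : ℤ) {a : B} {i : ℤ} (ha : c a = Finsupp.single i a) :
    Dm c D m a = c (D a) (i + m) := by
  simp [Dm, ha]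

noncomputable def Dd (hc : Gr c) (D : Derivation k B B) (m : ℤ) : Derivation k B B :=
  Derivation.mk' (Dm c D m) (by
    intro a b
    induction a using hc.induct with
    | h0 => simp
    | ha a a' h h' => simp only [add_mul, map_add, h, h', smul_eq_mul, mul_add]; ring
    | hh i a ha =>
      induction b using hc.induct with
      | h0 => simp
      | ha b b' h h' => simp only [mul_add, map_add, h, h', smul_eq_mul, add_mul]; ring
      | hh j b hb =>
        rw [Dm_hom D m (hc.homMul ha hb), Dm_hom D m ha, Dm_hom D m hb, D.leibniz, map_add c,
          Finsupp.add_apply, smul_eq_mul, smul_eq_mul, hc.mul _ _ _ ha, hc.mul _ _ _ hb,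
          smul_eq_mul, smul_eq_mul]
        congr 4 <;> ring)

lemma Dd_hom (hc : Gr c) (D : Derivation k B B) (m : ℤ) {a : B} {i : ℤ}
    (ha : c a = Finsupp.single i a) : Dd hc D m a = c (D a) (i + m) := Dm_hom D m ha

lemma Dd_homog (hc : Gr c) (D : Derivation k B B) (m : ℤ) {a : B} {i : ℤ}
    (ha : c a = Finsupp.single i a) :
    c (Dd hc D m a) = Finsupp.single (i + m) (Dd hc D m a) := by
  rw [Dd_hom hc D m ha, hc.proj]

lemma Dd_iter_homog (hc : Gr c) (D : Derivation k B B) (m : ℤ) {a : B} {i : ℤ}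
    (ha : c a = Finsupp.single i a) (n : ℕ) :
    c ((Dd hc D m)^[n] a) = Finsupp.single (i + n * m) ((Dd hc D m)^[n] a) := by
  induction n with
  | zero => simpa using ha
  | succ n ih =>
    rw [Function.iterate_succ_apply', Dd_homog hc D m ih]
    congr 1
    push_cast; ring

lemma coeff_D (hc : Gr c) (D : Derivation k B B) (b : B) (l : ℤ) :
    c (D b) l = (c b).sum (fun j v => Dd hc D (l - j) v) := by
  conv_lhs => rw [← hc.sum b]
  rw [Finsupp.sum, Finsupp.sum, map_sum, map_sum, Finsupp.finsetSum_apply]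
  refine Finset.sum_congr rfl fun j _ => ?_
  rw [Dd_hom hc D _ (hc.proj b j)]
  congr 1; ring

lemma step (hc : Gr c) (D : Derivation k B B) {m : ℤ} (hm : ∀ l, m < l → Dd hc D l = 0)
    {b : B} {J : ℤ} (hb : ∀ j, J < j → c b j = 0) :
    (∀ j, J + m < j → c (D b) j = 0) ∧ c (D b) (J + m) = Dd hc D m (c b J) := by
  constructor
  · intro j hj
    rw [coeff_D hc, Finsupp.sum]
    refine Finset.sum_eq_zero fun i _ => ?_
    by_cases hi : J < i
    · rw [hb i hi, map_zero]
    · rw [hm _ (by omega)]; rfl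
  · rw [coeff_D hc, Finsupp.sum, Finset.sum_eq_single J]
    · congr 2; ring
    · intro i _ hi
      by_cases hi : J < i
      · rw [hb i hi, map_zero]
      · rw [hm _ (by omega)]; rfl
    · intro h
      rw [Finsupp.notMem_support_iff.1 h, map_zero]

lemma steps (hc : Gr c) (D : Derivation k B B) {m : ℤ} (hm : ∀ l, m < l → Dd hc D l = 0)
    {b : B} {J : ℤ} (hb : ∀ j, J < j → c b j = 0) (n : ℕ) :
    (∀ j, J + n * m < j → c (D^[n] b) j = 0) ∧
      c (D^[n] b) (J + n * m) = (Dd hc D m)^[n] (c b J) := by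
  induction n with
  | zero => simpa using hb
  | succ n ih =>
    have := step hc D hm ih.1
    rw [Function.iterate_succ_apply', Function.iterate_succ_apply', ← ih.2, ← this.2]
    rw [show J + ((n + 1 : ℕ) : ℤ) * m = J + n * m + m by push_cast; ring]
    exact ⟨this.1, rfl⟩

lemma LN_Dd (hc : Gr c) {D : Derivation k B B} (hD : LN D) {m : ℤ}
    (hm : ∀ l, m < l → Dd hc D l = 0) : LN (Dd hc D m) := by
  intro b
  induction b using hc.induct with
  | h0 => exact ⟨0, rfl⟩
  | ha a b h h' =>
    obtain ⟨n, hn⟩ := h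
    obtain ⟨n', hn'⟩ := h'
    refine ⟨max n n', ?_⟩
    rw [iter_add, iter_eq_zero_of_le _ (le_max_left _ _) hn,
      iter_eq_zero_of_le _ (le_max_right _ _) hn', add_zero]
  | hh i a ha =>
    obtain ⟨n, hn⟩ := hD a
    refine ⟨n, ?_⟩
    have := (steps hc D hm (b := a) (J := i)
      (fun j hj => by rw [ha, Finsupp.single_eq_of_ne (by omega)]) n).2
    rw [hn, ha] at this
    simpa using this.symm

lemma bd (hc : Gr c) (D : Derivation k B B) {a : B} {i : ℤ} (ha : c a = Finsupp.single i a) :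
    ∃ N : ℤ, ∀ l, N < l → Dd hc D l a = 0 := by
  obtain ⟨N, hN⟩ := (c (D a)).support.bddAbove
  refine ⟨N - i, fun l hl => ?_⟩
  rw [Dd_hom hc D l ha]
  by_contra h
  have := hN (Finset.mem_coe.2 (Finsupp.mem_support_iff.2 h))
  omega

lemma eq_zero_of_gen {D : Derivation k B B} {x y z : B}
    (hg : Algebra.adjoin k ({x, y, z} : Set B) = ⊤) (hx : D x = 0) (hy : D y = 0)
    (hz : D z = 0) : D = 0 := by
  refine Derivation.ext_of_adjoin_eq_top _ hg ?_
  rintro t (rfl | rfl | rfl)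
  · simpa using hx
  · simpa using hy
  · simpa using hz

lemma exists_m (hc : Gr c) {D : Derivation k B B} (hD0 : D ≠ 0) {x y z : B} {i j l : ℤ}
    (hg : Algebra.adjoin k ({x, y, z} : Set B) = ⊤) (hx : c x = Finsupp.single i x)
    (hy : c y = Finsupp.single j y) (hz : c z = Finsupp.single l z) :
    ∃ m, Dd hc D m ≠ 0 ∧ ∀ r, m < r → Dd hc D r = 0 := by
  obtain ⟨N1, h1⟩ := bd hc D hx
  obtain ⟨N2, h2⟩ := bd hc D hy
  obtain ⟨N3, h3⟩ := bd hc D hz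
  have hb : ∃ N : ℤ, ∀ r, Dd hc D r ≠ 0 → r ≤ N := by
    refine ⟨max N1 (max N2 N3), fun r hr => ?_⟩
    by_contra hlt
    rw [not_le, max_lt_iff, max_lt_iff] at hlt
    exact hr (eq_zero_of_gen hg (h1 r hlt.1) (h2 r hlt.2.1) (h3 r hlt.2.2))
  have hne : ∃ r, Dd hc D r ≠ 0 := by
    by_contra! h
    apply hD0
    ext b
    rw [← hc.sum (D b), Finsupp.sum]
    refine Finset.sum_eq_zero fun r _ => ?_
    rw [coeff_D hc]
    simp [h]
  obtain ⟨m, hm, hm'⟩ := Int.exists_greatest_of_bdd hb hne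
  refine ⟨m, hm, fun r hr => ?_⟩
  by_contra h
  have := hm' r h
  omega

end Grad

section Main
variable {k B : Type*} [Field k] [IsAlgClosed k] [CharZero k] [CommRing B] [IsDomain B]
  [Algebra k B]
variable {c : B →ₗ[k] (ℤ →₀ B)}

open Polynomial in
lemma factor_form (u v : B) (p : k[X]) (n : ℕ) (hp : p.natDegree ≤ n + 1) :
    ∃ α β : k, (α ≠ 0 ∨ β ≠ 0) ∧ ∃ w : B,
      MvPolynomial.aeval ![u, v] (p.homogenize (n + 1)) =
        (algebraMap k B α * u + algebraMap k B β * v) * w := by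
  by_cases h : p.natDegree = n + 1
  · obtain ⟨r, hr⟩ := IsAlgClosed.exists_root p (by
      intro h0
      have := natDegree_eq_zero_iff_degree_le_zero.2 h0.le
      omega)
    obtain ⟨q, rfl⟩ := dvd_iff_isRoot.2 hr
    have hq : q ≠ 0 := by rintro rfl; simp at h
    rw [natDegree_mul (X_sub_C_ne_zero r) hq, natDegree_X_sub_C] at h
    refine ⟨1, -r, Or.inl one_ne_zero, MvPolynomial.aeval ![u, v] (q.homogenize n), ?_⟩
    rw [add_comm n 1, homogenize_mul _ _ (natDegree_X_sub_C r).le (by omega), map_mul]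
    congr 1
    have e : (X - C r : k[X]).homogenize 1 = .X 0 - .C r * .X 1 := by
      have : (X - C r : k[X]) = X + C (-r) := by simp [sub_eq_add_neg]
      rw [this, homogenize_add, homogenize_X one_ne_zero, homogenize_C]
      simp [sub_eq_add_neg]
    rw [e]
    simp [sub_eq_add_neg]
  · refine ⟨0, 1, Or.inr one_ne_zero, MvPolynomial.aeval ![u, v] (p.homogenize n), ?_⟩
    rw [← one_mul p, add_comm n 1, homogenize_mul 1 p (by simp) (by omega), map_mul]
    simp

/-- Shape of the homogeneous elements. -/
def Shape (k : Type*) {B : Type*} [Field k] [CommRing B] [Algebra k B] (x y z : B)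
    (e a b n : ℕ) (f : B) : Prop :=
  ∃ p : Polynomial k, p.natDegree ≤ n ∧
    f = z ^ e * x ^ a * y ^ b * MvPolynomial.aeval ![x ^ 5, y ^ 3] (p.homogenize n)

open Polynomial in
lemma shape_mono {x y z : B} (hrel : x ^ 5 + y ^ 3 + z ^ 2 = 0) (a b e : ℕ) :
    Shape k x y z (e % 2) (a % 5) (b % 3) (a / 5 + b / 3 + e / 2) (x ^ a * y ^ b * z ^ e) := by
  have hz : z ^ 2 = -(x ^ 5 + y ^ 3) := by linear_combination hrel
  have hpow : (MvPolynomial.aeval ![x ^ 5, y ^ 3] (((-(X + C 1) : k[X]) ^ (e / 2)).homogenize (e / 2)))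
      = (-(x ^ 5 + y ^ 3)) ^ (e / 2) := by
    generalize e / 2 = r
    generalize x ^ 5 = u
    generalize y ^ 3 = v
    have hd : (-(X + C 1) : k[X]).natDegree ≤ 1 := by
      rw [natDegree_neg, natDegree_X_add_C]
    induction r with
    | zero => simp
    | succ r ih =>
      rw [pow_succ, homogenize_mul _ _ ?_ hd, map_mul, ih, pow_succ]
      · congr 1
        have : (-(X + C 1) : k[X]) = (-1 : k) • X + (-1 : k) • C 1 := by simp; ring
        rw [this, homogenize_add, homogenize_smul, homogenize_smul, homogenize_X one_ne_zero,
          homogenize_C]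
        simp; ring
      · exact (natDegree_pow_le_of_le r hd).trans (by simp)
  have hd : ((-(X + C 1) : k[X]) ^ (e / 2)).natDegree ≤ e / 2 := by
    refine (natDegree_pow_le_of_le (m := 1) (e/2) ?_).trans (by simp)
    rw [natDegree_neg, natDegree_X_add_C]
  have hd1 : (X ^ (a / 5) : k[X]).natDegree ≤ a / 5 + b / 3 := by
    rw [natDegree_X_pow]; omega
  refine ⟨X ^ (a / 5) * (-(X + C 1)) ^ (e / 2), ?_, ?_⟩
  · exact natDegree_mul_le_of_le hd1 hd
  · rw [homogenize_mul _ _ hd1 hd, map_mul, hpow, homogenize_X_pow (by omega), ← hz]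
    conv_lhs => rw [← Nat.mod_add_div a 5, ← Nat.mod_add_div b 3, ← Nat.mod_add_div e 2]
    simp only [map_mul, map_pow, MvPolynomial.aeval_X, Matrix.cons_val_zero, Matrix.cons_val_one,
      Nat.add_sub_cancel_left, pow_add, pow_mul]
    ring

lemma homPow (hc : Gr c) (h1 : c 1 = Finsupp.single 0 1) {x : B} {i : ℤ}
    (hx : c x = Finsupp.single i x) (n : ℕ) : c (x ^ n) = Finsupp.single (i * n) (x ^ n) := by
  induction n with
  | zero => simpa using h1
  | succ n ih =>
    rw [pow_succ, hc.homMul ih hx]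
    congr 1; push_cast; ring

structure Setup (c : B →ₗ[k] (ℤ →₀ B)) (x y z : B) : Prop where
  gr : Gr c
  one : c 1 = Finsupp.single 0 1
  hx : c x = Finsupp.single 6 x
  hy : c y = Finsupp.single 10 y
  hz : c z = Finsupp.single 15 z
  rel : x ^ 5 + y ^ 3 + z ^ 2 = 0
  gen : ∀ b : B, ∃ p : MvPolynomial (Fin 3) k, MvPolynomial.aeval ![x, y, z] p = b
  gen' : Algebra.adjoin k ({x, y, z} : Set B) = ⊤
  indep : ∀ α β : k, algebraMap k B α * x ^ 5 + algebraMap k B β * y ^ 3 = 0 → α = 0 ∧ β = 0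

variable {x y z : B}

lemma Setup.mono (S : Setup c x y z) (a b e : ℕ) : c (x ^ a * y ^ b * z ^ e) =
    Finsupp.single (6 * a + 10 * b + 15 * e : ℤ) (x ^ a * y ^ b * z ^ e) :=
  S.gr.homMul (S.gr.homMul (homPow S.gr S.one S.hx a) (homPow S.gr S.one S.hy b))
    (homPow S.gr S.one S.hz e)

lemma Setup.mem_span (S : Setup c x y z) (f : B) (d : ℤ) :
    c f d ∈ Submodule.span k {g | ∃ a b e : ℕ, (6 * a + 10 * b + 15 * e : ℤ) = d ∧
      g = x ^ a * y ^ b * z ^ e} := by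
  obtain ⟨p, rfl⟩ := S.gen f
  induction p using MvPolynomial.induction_on' with
  | monomial m r =>
    have : MvPolynomial.aeval ![x, y, z] (MvPolynomial.monomial m r) =
        r • (x ^ (m 0) * y ^ (m 1) * z ^ (m 2)) := by
      rw [MvPolynomial.aeval_monomial, Finsupp.prod_fintype _ _ (by simp), Fin.prod_univ_three,
        Algebra.smul_def]
      rfl
    rw [this, map_smul, S.mono, Finsupp.smul_apply]
    apply Submodule.smul_mem
    rw [Finsupp.single_apply]
    split_ifs with h
    · exact Submodule.subset_span ⟨_, _, _, h, rfl⟩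
    · exact Submodule.zero_mem _
  | add p q hp hq =>
    rw [map_add, map_add, Finsupp.add_apply]
    exact Submodule.add_mem _ hp hq

lemma Setup.shape (S : Setup c x y z) {f : B} {d : ℤ} (hf : c f = Finsupp.single d f)
    (hf0 : f ≠ 0) : ∃ e a b n : ℕ, (6 * a + 10 * b + 15 * e + 30 * n : ℤ) = d ∧
      Shape k x y z e a b n f := by
  have hm := S.mem_span f d
  rw [hf, Finsupp.single_eq_same] at hm
  by_cases hex : ∃ a b e : ℕ, (6 * a + 10 * b + 15 * e : ℤ) = d
  · obtain ⟨a, b, e, h⟩ := hex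
    refine ⟨e % 2, a % 5, b % 3, a / 5 + b / 3 + e / 2, by omega, ?_⟩
    clear hf hf0
    induction hm using Submodule.span_induction with
    | mem g hg =>
      obtain ⟨a', b', e', h', rfl⟩ := hg
      have := shape_mono (k := k) S.rel a' b' e'
      have e1 : e' % 2 = e % 2 := by omega
      have e2 : a' % 5 = a % 5 := by omega
      have e3 : b' % 3 = b % 3 := by omega
      have e4 : a' / 5 + b' / 3 + e' / 2 = a / 5 + b / 3 + e / 2 := by omega
      rwa [e1, e2, e3, e4] at this
    | zero => exact ⟨0, by simp, by simp⟩
    | add g g' _ _ hg hg' =>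
      obtain ⟨p, hp, rfl⟩ := hg
      obtain ⟨q, hq, rfl⟩ := hg'
      exact ⟨p + q, Polynomial.natDegree_add_le_of_degree_le hp hq, by
        rw [Polynomial.homogenize_add, map_add, mul_add]⟩
    | smul r g _ hg =>
      obtain ⟨p, hp, rfl⟩ := hg
      exact ⟨r • p, (Polynomial.natDegree_smul_le _ _).trans hp, by
        rw [Polynomial.homogenize_smul, map_smul, mul_smul_comm]⟩
  · exfalso
    apply hf0
    have : {g | ∃ a b e : ℕ, (6 * a + 10 * b + 15 * e : ℤ) = d ∧
      g = x ^ a * y ^ b * z ^ e} = ∅ := by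
      ext g
      simp only [Set.mem_ofPred_eq, Set.mem_empty_iff_false, iff_false]
      rintro ⟨a, b, e, h, -⟩
      exact hex ⟨a, b, e, h⟩
    rw [this] at hm
    simpa using hm

lemma Setup.const (S : Setup c x y z) {f : B} (hf : c f = Finsupp.single 0 f) :
    ∃ r : k, f = algebraMap k B r := by
  by_cases hf0 : f = 0
  · exact ⟨0, by simp [hf0]⟩
  obtain ⟨e, a, b, n, h, p, hp, rfl⟩ := S.shape hf hf0
  obtain ⟨rfl, rfl, rfl, rfl⟩ : e = 0 ∧ a = 0 ∧ b = 0 ∧ n = 0 := by omega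
  rw [Polynomial.eq_C_of_natDegree_le_zero hp]
  exact ⟨p.coeff 0, by simp⟩

lemma Setup.nonneg (S : Setup c x y z) {f : B} {d : ℤ} (hf : c f = Finsupp.single d f)
    (hf0 : f ≠ 0) : 0 ≤ d := by
  obtain ⟨e, a, b, n, h, -⟩ := S.shape hf hf0
  omega

lemma Setup.x0 (S : Setup c x y z) : x ≠ 0 := by
  rintro rfl
  have := S.indep 1 0 (by simp)
  simp at this

lemma Setup.y0 (S : Setup c x y z) : y ≠ 0 := by
  rintro rfl
  have := S.indep 0 1 (by simp)
  simp at this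

lemma Setup.z0 (S : Setup c x y z) : z ≠ 0 := by
  rintro rfl
  have := S.indep 1 1 (by simpa using S.rel)
  simp at this

lemma Setup.ofx (S : Setup c x y z) {D : Derivation k B B} (hD : LN D) (h : D x = 0) : D = 0 := by
  have e : (1 : B) * y ^ (1 + 2) + 1 * z ^ (0 + 2) = - x ^ 5 := by linear_combination S.rel
  obtain ⟨h1, h2⟩ := hD.key (s := 1) (t := 1) (a := y) (b := z) (p := 1) (q := 0) (by simp) (by simp)
    one_ne_zero one_ne_zero (by rw [e]; simp [D.leibniz_pow, h])
    (by rw [e]; exact neg_ne_zero.2 (pow_ne_zero _ S.x0))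
  exact eq_zero_of_gen S.gen' h h1 h2

lemma Setup.ofy (S : Setup c x y z) {D : Derivation k B B} (hD : LN D) (h : D y = 0) : D = 0 := by
  have e : (1 : B) * x ^ (3 + 2) + 1 * z ^ (0 + 2) = - y ^ 3 := by linear_combination S.rel
  obtain ⟨h1, h2⟩ := hD.key (s := 1) (t := 1) (a := x) (b := z) (p := 3) (q := 0) (by simp) (by simp)
    one_ne_zero one_ne_zero (by rw [e]; simp [D.leibniz_pow, h])
    (by rw [e]; exact neg_ne_zero.2 (pow_ne_zero _ S.y0))
  exact eq_zero_of_gen S.gen' h1 h h2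

lemma Setup.ofz (S : Setup c x y z) {D : Derivation k B B} (hD : LN D) (h : D z = 0) : D = 0 := by
  have e : (1 : B) * x ^ (3 + 2) + 1 * y ^ (1 + 2) = - z ^ 2 := by linear_combination S.rel
  obtain ⟨h1, h2⟩ := hD.key (s := 1) (t := 1) (a := x) (b := y) (p := 3) (q := 1) (by simp) (by simp)
    one_ne_zero one_ne_zero (by rw [e]; simp [D.leibniz_pow, h])
    (by rw [e]; exact neg_ne_zero.2 (pow_ne_zero _ S.z0))
  exact eq_zero_of_gen S.gen' h1 h2 h

lemma Setup.ofker (S : Setup c x y z) {D : Derivation k B B} (hD : LN D) {f : B} {d : ℤ}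
    (hf : c f = Finsupp.single d f) (hf0 : f ≠ 0) (hd : d ≠ 0) (h : D f = 0) : D = 0 := by
  obtain ⟨e, a, b, n, hdd, p, hp, rfl⟩ := S.shape hf hf0
  have h1 := hD.fc h hf0
  have h2 := hD.fc' h hf0
  have n1 := left_ne_zero_of_mul hf0
  have n2 := right_ne_zero_of_mul hf0
  have hyb := hD.fc' h1 n1
  have h3 := hD.fc h1 n1
  have n3 := left_ne_zero_of_mul n1
  have hxa := hD.fc' h3 n3
  have hze := hD.fc h3 n3
  rcases e with _ | e
  swap
  · exact S.ofz hD (hD.pow hze)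
  rcases a with _ | a
  swap
  · exact S.ofx hD (hD.pow hxa)
  rcases b with _ | b
  swap
  · exact S.ofy hD (hD.pow hyb)
  rcases n with _ | n
  · simp at hdd; omega
  obtain ⟨α, β, hab, w, hw⟩ := factor_form (x ^ 5) (y ^ 3) p n hp
  rw [hw] at h2 n2
  have hl := hD.fc h2 n2
  have nl := left_ne_zero_of_mul n2
  have inj := (algebraMap k B).injective
  by_cases hα : α = 0
  · have hβ : β ≠ 0 := by tauto
    subst hα
    rw [map_zero, zero_mul, zero_add] at hl nl
    exact S.ofy hD (hD.pow (n := 2) (hD.fc' hl nl))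
  by_cases hβ : β = 0
  · subst hβ
    rw [map_zero, zero_mul, add_zero] at hl nl
    exact S.ofx hD (hD.pow (n := 4) (hD.fc' hl nl))
  have := hD.key (p := 3) (q := 1) (D.map_algebraMap α) (D.map_algebraMap β)
    ((map_ne_zero_iff _ inj).2 hα) ((map_ne_zero_iff _ inj).2 hβ) hl nl
  exact S.ofx hD this.1

lemma Setup.rigid (S : Setup c x y z) {D : Derivation k B B} (hD : LN D) : D = 0 := by
  by_contra hD0
  obtain ⟨m, hm0, hm⟩ := exists_m S.gr hD0 S.gen' S.hx S.hy S.hz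
  have hE := LN_Dd S.gr hD hm
  -- every nonzero homogeneous element ends in degree zero
  have key : ∀ f : B, c f = Finsupp.single 30 f → ∀ n, Deg (Dd S.gr D m) f n →
      (30 : ℤ) + n * m = 0 := by
    intro f hf n hn
    by_contra hne
    refine hm0 (S.ofker hE (Dd_iter_homog S.gr D m hf n) hn.1 hne ?_)
    rw [← Function.iterate_succ_apply' (Dd S.gr D m)]
    exact hn.2
  have hx5 : c (x ^ 5) = Finsupp.single 30 (x ^ 5) := homPow S.gr S.one S.hx 5
  have hy3 : c (y ^ 3) = Finsupp.single 30 (y ^ 3) := homPow S.gr S.one S.hy 3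
  obtain ⟨n, hn⟩ := hE.deg (pow_ne_zero 5 S.x0)
  obtain ⟨n', hn'⟩ := hE.deg (pow_ne_zero 3 S.y0)
  have k1 := key _ hx5 n hn
  have k2 := key _ hy3 n' hn'
  have hm00 : m ≠ 0 := by rintro rfl; simp at k1
  obtain rfl : n = n' := by
    have : (n : ℤ) * m = n' * m := by linarith
    exact_mod_cast mul_right_cancel₀ hm00 this
  have g1 := Dd_iter_homog S.gr D m hx5 n
  have g2 := Dd_iter_homog S.gr D m hy3 n
  rw [k1] at g1 g2
  obtain ⟨r, hr⟩ := S.const g1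
  obtain ⟨s, hs⟩ := S.const g2
  have hf : c (s • x ^ 5 + (-r) • y ^ 3) = Finsupp.single 30 (s • x ^ 5 + (-r) • y ^ 3) := by
    rw [map_add, map_smul, map_smul, hx5, hy3, Finsupp.smul_single, Finsupp.smul_single,
      Finsupp.single_add]
  have hs0 : s ≠ 0 := by
    rintro rfl
    exact hn'.1 (by simpa using hs)
  have hf0 : s • x ^ 5 + (-r) • y ^ 3 ≠ 0 := by
    intro h
    rw [Algebra.smul_def, Algebra.smul_def] at h
    exact hs0 (S.indep _ _ h).1
  obtain ⟨n'', hn''⟩ := hE.deg hf0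
  have k3 := key _ hf n'' hn''
  obtain rfl : n = n'' := by
    have : (n : ℤ) * m = n'' * m := by linarith
    exact_mod_cast mul_right_cancel₀ hm00 this
  apply hn''.1
  rw [iter_add, iter_smul, iter_smul, hr, hs, Algebra.smul_def, Algebra.smul_def, ← map_mul,
    ← map_mul, ← map_add]
  rw [show s * r + -r * s = 0 by ring, map_zero]

end Main

lemma mono_eval {k B : Type*} [Field k] [CommRing B] [Algebra k B] (x y z : B)
    (m : Fin 3 →₀ ℕ) (r : k) :
    MvPolynomial.aeval ![x, y, z] (MvPolynomial.monomial m r) =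
        r • (x ^ (m 0) * y ^ (m 1) * z ^ (m 2)) := by
  rw [MvPolynomial.aeval_monomial, Finsupp.prod_fintype _ _ (by simp), Fin.prod_univ_three,
    Algebra.smul_def]
  rfl

section Concrete
variable (k : Type*) [Field k]

open Polynomial in
noncomputable def fpol : Polynomial (Polynomial (Polynomial k)) :=
  X ^ 2 + C (X ^ 3 + C (X ^ 5))

open Polynomial in
lemma fpol_monic : (fpol k).Monic := monic_X_pow_add_C _ (by norm_num)

open Polynomial in
lemma fpol_natDegree : (fpol k).natDegree = 2 := natDegree_X_pow_add_C

open Polynomial in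
lemma fpol_prime : Prime (fpol k) := by
  refine Irreducible.prime ?_
  rw [(fpol_monic k).irreducible_iff_roots_eq_zero_of_degree_le_three
    (fpol_natDegree k).ge (by rw [fpol_natDegree]; norm_num)]
  rw [Multiset.eq_zero_iff_forall_notMem]
  intro g hg
  have hr : g ^ 2 + (X ^ 3 + C (X ^ 5)) = 0 := by
    simpa [fpol] using (isRoot_of_mem_roots hg).eq_zero
  have h2 : (g ^ 2).natDegree = 3 := by
    rw [eq_neg_of_add_eq_zero_left hr, natDegree_neg]
    exact natDegree_X_pow_add_C
  rw [natDegree_pow] at h2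
  omega

noncomputable abbrev px : PoincareSurfaceRing k := Ideal.Quotient.mk _ (MvPolynomial.X 0)
noncomputable abbrev py : PoincareSurfaceRing k := Ideal.Quotient.mk _ (MvPolynomial.X 1)
noncomputable abbrev pz : PoincareSurfaceRing k := Ideal.Quotient.mk _ (MvPolynomial.X 2)

lemma prel : px k ^ 5 + py k ^ 3 + pz k ^ 2 = 0 := by
  rw [← map_pow, ← map_pow, ← map_pow, ← map_add, ← map_add]
  exact Ideal.Quotient.eq_zero_iff_mem.2 (Ideal.subset_span rfl)

noncomputable def plift {A : Type*} [CommRing A] [Algebra k A] (x y z : A)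
    (h : x ^ 5 + y ^ 3 + z ^ 2 = 0) : PoincareSurfaceRing k →ₐ[k] A :=
  Ideal.Quotient.liftₐ _ (MvPolynomial.aeval ![x, y, z]) (by
    intro a ha
    obtain ⟨q, rfl⟩ := Ideal.mem_span_singleton.1 ha
    simp [h])

section
variable {A : Type*} [CommRing A] [Algebra k A] (x y z : A) (h : x ^ 5 + y ^ 3 + z ^ 2 = 0)
lemma plift_x : plift k x y z h (px k) = x := by
  change MvPolynomial.aeval ![x, y, z] (MvPolynomial.X 0) = x
  simp
lemma plift_y : plift k x y z h (py k) = y := by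
  change MvPolynomial.aeval ![x, y, z] (MvPolynomial.X 1) = y
  simp
lemma plift_z : plift k x y z h (pz k) = z := by
  change MvPolynomial.aeval ![x, y, z] (MvPolynomial.X 2) = z
  simp
end

lemma pgen (b : PoincareSurfaceRing k) :
    ∃ p : MvPolynomial (Fin 3) k, MvPolynomial.aeval ![px k, py k, pz k] p = b := by
  obtain ⟨p, rfl⟩ := Ideal.Quotient.mk_surjective b
  refine ⟨p, ?_⟩
  have : (MvPolynomial.aeval ![px k, py k, pz k] : MvPolynomial (Fin 3) k →ₐ[k] _) =
      Ideal.Quotient.mkₐ k _ := by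
    ext i
    fin_cases i <;> simp
  rw [this]; rfl

lemma pgen' : Algebra.adjoin k ({px k, py k, pz k} : Set (PoincareSurfaceRing k)) = ⊤ := by
  rw [eq_top_iff]
  rintro b -
  obtain ⟨p, rfl⟩ := pgen k b
  have : ({px k, py k, pz k} : Set (PoincareSurfaceRing k)) =
      Set.range ![px k, py k, pz k] := by
    ext t
    simp
    tauto
  rw [this, Algebra.adjoin_range_eq_range_aeval]
  exact ⟨p, rfl⟩

lemma palg_ext {A : Type*} [CommRing A] {f g : PoincareSurfaceRing k →+* A}
    (hk : ∀ r : k, f (algebraMap k _ r) = g (algebraMap k _ r))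
    (hx : f (px k) = g (px k)) (hy : f (py k) = g (py k)) (hz : f (pz k) = g (pz k)) : f = g := by
  apply Ideal.Quotient.ringHom_ext
  apply MvPolynomial.ringHom_ext
  · exact hk
  · intro i
    fin_cases i
    · exact hx
    · exact hy
    · exact hz

lemma fpol_eval {A : Type*} [CommRing A] (F : Polynomial (Polynomial k) →+* A) (t : A) :
    (fpol k).eval₂ F t = t ^ 2 + (F Polynomial.X ^ 3 + F (Polynomial.C Polynomial.X) ^ 5) := by
  rw [fpol, Polynomial.eval₂_add, Polynomial.eval₂_pow, Polynomial.eval₂_X,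
    Polynomial.eval₂_C, map_add, map_pow, Polynomial.C_pow, map_pow]

lemma arel : (AdjoinRoot.of (fpol k) (Polynomial.C Polynomial.X)) ^ 5 +
    (AdjoinRoot.of (fpol k) Polynomial.X) ^ 3 + (AdjoinRoot.root (fpol k)) ^ 2 = 0 := by
  have := AdjoinRoot.eval₂_root (fpol k)
  rw [fpol_eval] at this
  linear_combination this

noncomputable def toA : PoincareSurfaceRing k →ₐ[k] AdjoinRoot (fpol k) :=
  plift k (AdjoinRoot.of (fpol k) (Polynomial.C Polynomial.X))
    (AdjoinRoot.of (fpol k) Polynomial.X) (AdjoinRoot.root (fpol k)) (arel k)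

noncomputable def ofR : Polynomial (Polynomial k) →+* PoincareSurfaceRing k :=
  Polynomial.eval₂RingHom (Polynomial.eval₂RingHom (algebraMap k _) (px k)) (py k)

noncomputable def ofA : AdjoinRoot (fpol k) →+* PoincareSurfaceRing k :=
  AdjoinRoot.lift (ofR k) (pz k) (by
    have := prel k
    rw [fpol_eval, ofR]
    simp only [Polynomial.coe_eval₂RingHom, Polynomial.eval₂_X, Polynomial.eval₂_C]
    linear_combination this)

lemma ofA_toA (b : PoincareSurfaceRing k) : ofA k (toA k b) = b := by
  have : (ofA k).comp (toA k).toRingHom = RingHom.id _ := by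
    apply palg_ext k
    · intro r
      change ofA k (toA k (algebraMap k _ r)) = algebraMap k _ r
      rw [AlgHom.commutes]
      change ofA k (AdjoinRoot.of (fpol k) (Polynomial.C (Polynomial.C r))) = _
      rw [ofA, AdjoinRoot.lift_of]
      simp [ofR]
    · change ofA k (toA k (px k)) = px k
      rw [toA, plift_x, ofA, AdjoinRoot.lift_of]
      simp [ofR]
    · change ofA k (toA k (py k)) = py k
      rw [toA, plift_y, ofA, AdjoinRoot.lift_of]
      simp [ofR]
    · change ofA k (toA k (pz k)) = pz k
      rw [toA, plift_z, ofA, AdjoinRoot.lift_root]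
  exact congrArg (fun g : PoincareSurfaceRing k →+* PoincareSurfaceRing k => g b) this

lemma pdom : IsDomain (PoincareSurfaceRing k) := by
  have : IsDomain (AdjoinRoot (fpol k)) := AdjoinRoot.isDomain_of_prime (fpol_prime k)
  have hinj : Function.Injective (toA k) := Function.LeftInverse.injective (ofA_toA k)
  exact hinj.isDomain (toA k).toRingHom

open Polynomial in
lemma pindep (α β : k) (h : algebraMap k (PoincareSurfaceRing k) α * px k ^ 5 +
    algebraMap k (PoincareSurfaceRing k) β * py k ^ 3 = 0) : α = 0 ∧ β = 0 := by
  have h1 := congrArg (toA k) h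
  rw [map_add, map_mul, map_mul, AlgHom.commutes, AlgHom.commutes, map_pow, map_pow, map_zero,
    toA, plift_x, plift_y] at h1
  have h2 : AdjoinRoot.of (fpol k) (C (C α) * C X ^ 5 + C (C β) * X ^ 3) = 0 := by
    rw [← h1]
    simp only [map_add, map_mul, map_pow]
    rfl
  have inj := AdjoinRoot.of.injective_of_degree_ne_zero (f := fpol k) (by
    rw [degree_eq_natDegree (fpol_monic k).ne_zero, fpol_natDegree]; norm_num)
  have h3 := (injective_iff_map_eq_zero _).1 inj _ h2
  rw [← C_pow, ← C_mul] at h3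
  constructor
  · have := congrArg (fun p : k[X][X] => (p.coeff 0).coeff 5) h3
    simp only [coeff_add, coeff_C_zero, coeff_C_mul, coeff_X_pow, coeff_zero] at this
    simpa using this
  · have := congrArg (fun p : k[X][X] => (p.coeff 3).coeff 0) h3
    simp only [coeff_add, coeff_C, coeff_C_mul, coeff_X_pow, coeff_zero] at this
    simpa using this

noncomputable def pphi : PoincareSurfaceRing k →ₐ[k] AddMonoidAlgebra (PoincareSurfaceRing k) ℤ :=
  plift k (AddMonoidAlgebra.single (6 : ℤ) (px k)) (AddMonoidAlgebra.single (10 : ℤ) (py k))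
    (AddMonoidAlgebra.single (15 : ℤ) (pz k)) (by
    rw [AddMonoidAlgebra.single_pow, AddMonoidAlgebra.single_pow, AddMonoidAlgebra.single_pow]
    have e1 : (5 • 6 : ℤ) = 30 := by norm_num
    have e2 : (3 • 10 : ℤ) = 30 := by norm_num
    have e3 : (2 • 15 : ℤ) = 30 := by norm_num
    rw [e1, e2, e3, ← AddMonoidAlgebra.single_add, ← AddMonoidAlgebra.single_add, prel,
      AddMonoidAlgebra.single_zero])

noncomputable def pc : PoincareSurfaceRing k →ₗ[k] (ℤ →₀ PoincareSurfaceRing k) :=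
  (AddMonoidAlgebra.coeffLinearEquiv k).toLinearMap ∘ₗ (pphi k).toLinearMap

lemma pc_apply (b : PoincareSurfaceRing k) : pc k b = (pphi k b).coeff := rfl

lemma pphi_of_pc {a : PoincareSurfaceRing k} {i : ℤ} (h : pc k a = Finsupp.single i a) :
    pphi k a = AddMonoidAlgebra.single i a :=
  AddMonoidAlgebra.coeff_injective h

lemma pc_mul (a b : PoincareSurfaceRing k) (i : ℤ) (h : pc k a = Finsupp.single i a) (l : ℤ) :
    pc k (a * b) l = a * pc k b (l - i) := by
  rw [pc_apply, map_mul, pphi_of_pc k h, AddMonoidAlgebra.coeff_single_mul_apply, pc_apply]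
  congr 2; ring

lemma pphi_mono (m : Fin 3 →₀ ℕ) : ∃ i : ℤ, 
    pc k (px k ^ m 0 * py k ^ m 1 * pz k ^ m 2) =
      Finsupp.single i (px k ^ m 0 * py k ^ m 1 * pz k ^ m 2) := by
  refine ⟨m 0 • 6 + m 1 • 10 + m 2 • 15, ?_⟩
  rw [pc_apply, map_mul, map_mul, map_pow, map_pow, map_pow, pphi, plift_x, plift_y, plift_z,
    AddMonoidAlgebra.single_pow, AddMonoidAlgebra.single_pow, AddMonoidAlgebra.single_pow,
    AddMonoidAlgebra.single_mul_single, AddMonoidAlgebra.single_mul_single]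
  rfl

lemma pinduct {P : PoincareSurfaceRing k → Prop} (ha : ∀ a b, P a → P b → P (a + b))
    (hs : ∀ (r : k) a, P a → P (r • a)) (hm : ∀ i a, pc k a = Finsupp.single i a → P a)
    (b : PoincareSurfaceRing k) : P b := by
  obtain ⟨p, rfl⟩ := pgen k b
  induction p using MvPolynomial.induction_on' with
  | monomial m r =>
    have : MvPolynomial.aeval ![px k, py k, pz k] (MvPolynomial.monomial m r) =
        r • (px k ^ (m 0) * py k ^ (m 1) * pz k ^ (m 2)) :=
      mono_eval _ _ _ m r
    rw [this]
    obtain ⟨i, hi⟩ := pphi_mono k m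
    exact hs _ _ (hm i _ hi)
  | add p q hp hq =>
    rw [map_add]
    exact ha _ _ hp hq

lemma pgr : Gr (pc k) where
  mul a b i h l := pc_mul k a b i h l
  proj b j := by
    induction b using pinduct with
    | ha a b h h' => rw [map_add, Finsupp.add_apply, map_add, h, h', Finsupp.single_add]
    | hs r a h => rw [map_smul, Finsupp.smul_apply, map_smul, h, Finsupp.smul_single]
    | hm i a h =>
      rw [h, Finsupp.single_apply]
      split_ifs with hij
      · rw [h, hij]
      · simp
  sum b := by
    induction b using pinduct with
    | ha a b h h' =>
      rw [map_add, Finsupp.sum_add_index' (by simp) (by simp), h, h']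
    | hs r a h =>
      rw [map_smul, Finsupp.sum_smul_index' (by simp)]
      conv_rhs => rw [← h, Finsupp.smul_sum]
    | hm i a h => rw [h, Finsupp.sum_single_index rfl]

lemma psetup [IsAlgClosed k] [CharZero k] : 
    haveI := pdom k
    Setup (pc k) (px k) (py k) (pz k) :=
  haveI := pdom k
  { gr := pgr k
    one := by rw [pc_apply, map_one]; rfl
    hx := by rw [pc_apply, pphi, plift_x]; rfl
    hy := by rw [pc_apply, pphi, plift_y]; rfl
    hz := by rw [pc_apply, pphi, plift_z]; rfl
    rel := prel k
    gen := pgen k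
    gen' := pgen' k
    indep := pindep k }

end Concrete
end Rig

/-- Over an algebraically closed field `k` of characteristic zero, the ring
`B = k[x, y, z]/(x⁵ + y³ + z²)` is rigid: its only locally nilpotent `k`-derivation is `0`. -/
theorem poincareSurfaceRing_rigid (k : Type*) [Field k] [IsAlgClosed k] [CharZero k]
    (D : Derivation k (PoincareSurfaceRing k) (PoincareSurfaceRing k))
    (hln : ∀ b : PoincareSurfaceRing k, ∃ N : ℕ, (D.toLinearMap ^ N) b = 0) :
    D = 0 := by
  have := Rig.pdom k
  refine (Rig.psetup k).rigid (fun b => ?_)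
  obtain ⟨N, hN⟩ := hln b
  refine ⟨N, ?_⟩
  rw [Module.End.pow_apply] at hN
  exact hN
end
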